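/- Let n ≥ 4 be an integer and let G be the grid P_n □ P_4. Then the strong convexity spectrum of G equals S_SC(G) = {k ∈ ℤ : 1 ≤ k ≤ 4n−4} \ {2, 3, 5}. -/

import Mathlib

/-!  Common definitions: oriented graphs, geodesic convexity, convexity number,
strong convexity spectrum, and grid graphs. -/

variable {V : Type*}

/-- A directed walk of length `k` from `u` to `v` along the arc relation `A`,
encoded by the function `f` listing its vertices. -/
def IsDirWalk (A : V → V → Prop) (k : ℕ) (f : ℕ → V) (u v : V) : Prop :=
  f 0 = u ∧ f k = v ∧ ∀ i, i < k → A (f i) (f (i + 1))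

/-- There is a directed walk from `u` to `v`. -/
def DirReachable (A : V → V → Prop) (u v : V) : Prop :=
  ∃ k f, IsDirWalk A k f u v

/-- A digraph (given by its arc relation) is strongly connected. -/
def StrongConnected (A : V → V → Prop) : Prop :=
  ∀ u v : V, DirReachable A u v

/-- A `uv`-geodesic: a directed walk from `u` to `v` of minimum possible length
(such a walk is automatically a directed path). -/
def IsGeodesic (A : V → V → Prop) (k : ℕ) (f : ℕ → V) (u v : V) : Prop :=
  IsDirWalk A k f u v ∧ ∀ k' f', IsDirWalk A k' f' u v → k ≤ k'

/-- A nonempty vertex set `C` is convex if every vertex lying on a geodesic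
between two vertices of `C` (in either direction) belongs to `C`. -/
def DConvex (A : V → V → Prop) (C : Set V) : Prop :=
  C.Nonempty ∧ ∀ u ∈ C, ∀ v ∈ C, ∀ k f, IsGeodesic A k f u v → ∀ i ≤ k, f i ∈ C

/-- `A` is an orientation of the simple graph `G`: every arc is along an edge,
every edge gets an arc, and no edge gets both directions. -/
def IsOrientation (G : SimpleGraph V) (A : V → V → Prop) : Prop :=
  (∀ x y, A x y → G.Adj x y) ∧ (∀ x y, G.Adj x y → A x y ∨ A y x) ∧
    (∀ x y, A x y → ¬ A y x)

/-- The convexity number of a digraph: the maximum cardinality of a proper convex set. -/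
noncomputable def convexityNumber [Fintype V] (A : V → V → Prop) : ℕ :=
  sSup {k | ∃ C : Set V, DConvex A C ∧ C ≠ Set.univ ∧ C.ncard = k}

/-- The strong convexity spectrum of a graph: the set of convexity numbers of
its strongly connected orientations. -/
def strongConvexitySpectrum [Fintype V] (G : SimpleGraph V) : Set ℕ :=
  {k | ∃ A : V → V → Prop, IsOrientation G A ∧ StrongConnected A ∧ convexityNumber A = k}

/-- The grid graph `P_n □ P_m`. -/
def gridGraph (n m : ℕ) : SimpleGraph (Fin n × Fin m) :=
  (SimpleGraph.pathGraph n).boxProd (SimpleGraph.pathGraph m)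

/-! ### Walks without functions -/

def Wk (A : V → V → Prop) : ℕ → V → V → Prop
  | 0, u, v => u = v
  | k + 1, u, v => ∃ x, A u x ∧ Wk A k x v

theorem wk_append {A : V → V → Prop} {i j : ℕ} {u v w : V}
    (h1 : Wk A i u v) (h2 : Wk A j v w) : Wk A (i + j) u w := by
  induction i generalizing u with
  | zero => simp only [Wk] at h1; subst h1; simpa using h2
  | succ i ih =>
    obtain ⟨x, hx, hw⟩ := h1
    rw [show i + 1 + j = (i + j) + 1 by omega]
    exact ⟨x, hx, ih hw⟩

theorem wk_one {A : V → V → Prop} {u v : V} (h : A u v) : Wk A 1 u v := ⟨v, h, rfl⟩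

theorem wk_snoc {A : V → V → Prop} {k : ℕ} {u v w : V}
    (h1 : Wk A k u v) (h2 : A v w) : Wk A (k + 1) u w := wk_append h1 (wk_one h2)

theorem wk_succ_right {A : V → V → Prop} {k : ℕ} {u w : V}
    (h : Wk A (k + 1) u w) : ∃ v, Wk A k u v ∧ A v w := by
  induction k generalizing u with
  | zero =>
    obtain ⟨x, hx, hw⟩ := h
    simp only [Wk] at hw
    subst hw
    exact ⟨u, rfl, hx⟩
  | succ k ih =>
    obtain ⟨x, hx, hw⟩ := h
    obtain ⟨v, hv, hvw⟩ := ih hw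
    exact ⟨v, ⟨x, hx, hv⟩, hvw⟩

theorem wk_of_fun {A : V → V → Prop} (f : ℕ → V) (a k : ℕ)
    (h : ∀ i, i < k → A (f (a + i)) (f (a + i + 1))) : Wk A k (f a) (f (a + k)) := by
  induction k with
  | zero => simp [Wk]
  | succ k ih =>
    exact wk_snoc (ih fun i hi => h i (by omega)) (h k (by omega))

theorem fun_of_wk {A : V → V → Prop} {k : ℕ} {u v : V} (h : Wk A k u v) :
    ∃ f, IsDirWalk A k f u v := by
  induction k generalizing u with
  | zero => exact ⟨fun _ => u, rfl, h, fun i hi => by omega⟩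
  | succ k ih =>
    obtain ⟨x, hx, hw⟩ := h
    obtain ⟨f, h0, hk, hf⟩ := ih hw
    refine ⟨fun i => Nat.casesOn i u f, rfl, hk, ?_⟩
    intro i hi
    cases i with
    | zero => simpa [h0] using hx
    | succ i => exact hf i (by omega)

theorem wk_iff {A : V → V → Prop} {k : ℕ} {u v : V} :
    Wk A k u v ↔ ∃ f, IsDirWalk A k f u v := by
  refine ⟨fun_of_wk, ?_⟩
  rintro ⟨f, h0, hk, hf⟩
  have := wk_of_fun f 0 k (by simpa using hf)
  simpa [h0, hk] using this

theorem fun_of_wk2 {A : V → V → Prop} {i j : ℕ} {u w v : V} (h1 : Wk A i u w)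
    (h2 : Wk A j w v) : ∃ f, IsDirWalk A (i + j) f u v ∧ f i = w := by
  obtain ⟨f, f0, fi, hf⟩ := fun_of_wk h1
  obtain ⟨g, g0, gj, hg⟩ := fun_of_wk h2
  refine ⟨fun m => if m < i then f m else g (m - i), ⟨?_, ?_, ?_⟩, ?_⟩
  · by_cases hi : 0 < i
    · simp [hi, f0]
    · have : i = 0 := by omega
      subst this
      simp [g0, ← fi, f0]
  · simp [gj]
  · intro m hm
    by_cases h : m + 1 < i
    · have h' : m < i := by omega
      simp only [h, h', if_true]
      exact hf m h'
    · by_cases h' : m < i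
      · have : m + 1 = i := by omega
        simp only [h', if_true, h, if_false]
        have e : m + 1 - i = 0 := by omega
        rw [e, g0, ← fi, ← this]
        exact hf m h'
      · simp only [h', h, if_false]
        have e : m + 1 - i = (m - i) + 1 := by omega
        rw [e]
        exact hg _ (by omega)
  · simp [g0]

/-- Convexity in terms of `Wk`. -/
def Cvx (A : V → V → Prop) (C : Set V) : Prop :=
  C.Nonempty ∧ ∀ u ∈ C, ∀ v ∈ C, ∀ w i j, Wk A i u w → Wk A j w v →
    (∀ k, Wk A k u v → i + j ≤ k) → w ∈ C

theorem dconvex_iff {A : V → V → Prop} {C : Set V} : DConvex A C ↔ Cvx A C := by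
  constructor
  · rintro ⟨hn, h⟩
    refine ⟨hn, fun u hu v hv w i j h1 h2 hk => ?_⟩
    obtain ⟨f, hf, rfl⟩ := fun_of_wk2 h1 h2
    exact h u hu v hv (i + j) f ⟨hf, fun k' f' h' => hk k' (wk_iff.2 ⟨f', h'⟩)⟩ i (by omega)
  · rintro ⟨hn, h⟩
    refine ⟨hn, fun u hu v hv k f hf i hi => ?_⟩
    obtain ⟨⟨f0, fk, hf⟩, hmin⟩ := hf
    refine h u hu v hv (f i) i (k - i) ?_ ?_ ?_
    · have := wk_of_fun f 0 i (by intro m hm; simpa using hf m (by omega))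
      simpa [f0] using this
    · have := wk_of_fun f i (k - i) (by intro m hm; exact hf _ (by omega))
      rwa [show i + (k - i) = k by omega, fk] at this
    · intro k' hk'
      obtain ⟨f', hf'⟩ := wk_iff.1 hk'
      have := hmin k' f' hf'
      omega

/-- Strong connectivity in terms of `Wk`. -/
def Str (A : V → V → Prop) : Prop := ∀ u v, ∃ k, Wk A k u v

theorem str_iff {A : V → V → Prop} : StrongConnected A ↔ Str A := by
  unfold StrongConnected Str DirReachable
  simp only [wk_iff]

theorem exists_geo {A : V → V → Prop} (h : Str A) (u v : V) :
    ∃ k, Wk A k u v ∧ ∀ k', Wk A k' u v → k ≤ k' := by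
  classical
  exact ⟨Nat.find (h u v), Nat.find_spec (h u v), fun k' hk' => Nat.find_min' _ hk'⟩

/-- In a convex set with another vertex, every vertex has an out-neighbour in the set. -/
theorem cvx_out {A : V → V → Prop} {S : Set V} (hs : Str A) (h : Cvx A S) {u v : V}
    (hu : u ∈ S) (hv : v ∈ S) (huv : u ≠ v) : ∃ x ∈ S, A u x := by
  obtain ⟨k, hk, hmin⟩ := exists_geo hs u v
  cases k with
  | zero => exact absurd hk huv
  | succ k =>
    obtain ⟨x, hx, hw⟩ := hk
    refine ⟨x, h.2 u hu v hv x 1 k (wk_one hx) hw ?_, hx⟩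
    intro k' hk'
    have := hmin k' hk'
    omega

theorem cvx_in {A : V → V → Prop} {S : Set V} (hs : Str A) (h : Cvx A S) {u v : V}
    (hu : u ∈ S) (hv : v ∈ S) (huv : u ≠ v) : ∃ x ∈ S, A x u := by
  obtain ⟨k, hk, hmin⟩ := exists_geo hs v u
  cases k with
  | zero => exact absurd hk huv.symm
  | succ k =>
    obtain ⟨x, hw, hx⟩ := wk_succ_right hk
    exact ⟨x, h.2 v hv u hu x k 1 hw (wk_one hx) hmin, hx⟩

theorem cvx_univ_nontrivial {A : V → V → Prop} [Nonempty V] : Cvx A Set.univ :=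
  ⟨Set.univ_nonempty, fun _ _ _ _ _ _ _ _ _ _ => trivial⟩

theorem cvx_singleton {A : V → V → Prop} (x : V) : Cvx A {x} := by
  refine ⟨⟨x, rfl⟩, ?_⟩
  rintro u rfl v rfl w i j h1 h2 hk
  have := hk 0 rfl
  have hi : i = 0 := by omega
  subst hi
  exact h1.symm

/-! ### Good pairs -/

structure Good (A : V → V → Prop) (C : Set V) : Prop where
  str : Str A
  cvx : Cvx A C
  ne : C ≠ Set.univ
  hull : ∀ S, Cvx A S → ∀ x ∈ S, ∀ y ∈ S, A x y → ¬ (x ∈ C ∧ y ∈ C) → S = Set.univ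

theorem conv_eq_of [Fintype V] {A : V → V → Prop} {C : Set V} (hC : Cvx A C)
    (hne : C ≠ Set.univ) (h : ∀ S, Cvx A S → S ≠ Set.univ → S.ncard ≤ C.ncard) :
    convexityNumber A = C.ncard := by
  unfold convexityNumber
  apply le_antisymm
  · apply csSup_le
    · exact ⟨_, C, dconvex_iff.2 hC, hne, rfl⟩
    · rintro k ⟨S, hS, hS', rfl⟩
      exact h S (dconvex_iff.1 hS) hS'
  · apply le_csSup
    · refine ⟨C.ncard, ?_⟩
      rintro k ⟨S, hS, hS', rfl⟩
      exact h S (dconvex_iff.1 hS) hS'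
    · exact ⟨C, dconvex_iff.2 hC, hne, rfl⟩

theorem ncard_le_of_small [Finite V] {A : V → V → Prop} {C S : Set V} (hC : Cvx A C)
    (h : ∀ x ∈ S, ∀ y ∈ S, x = y) : S.ncard ≤ C.ncard := by
  have h1 : S.ncard ≤ 1 := (Set.ncard_le_one (Set.toFinite S)).2 h
  have h2 : 0 < C.ncard := (Set.ncard_pos (Set.toFinite C)).2 hC.1
  omega

theorem Good.conv [Fintype V] {A : V → V → Prop} {C : Set V} (h : Good A C) :
    convexityNumber A = C.ncard := by
  refine conv_eq_of h.cvx h.ne fun S hS hne => ?_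
  by_cases hs : ∀ x ∈ S, ∀ y ∈ S, x = y
  · exact ncard_le_of_small h.cvx hs
  · push Not at hs
    obtain ⟨a, ha, b, hb, hab⟩ := hs
    refine Set.ncard_le_ncard (fun x hx => ?_) (Set.toFinite C)
    obtain ⟨y, hy, hxy⟩ : ∃ y ∈ S, y ≠ x := by
      by_cases hax : a = x
      · exact ⟨b, hb, by rw [← hax]; exact hab.symm⟩
      · exact ⟨a, ha, hax⟩
    obtain ⟨t, ht, hxt⟩ := cvx_out h.str hS hx hy hxy.symm
    by_contra hxC
    exact hne (h.hull S hS x hx t ht hxt (fun hh => hxC hh.1))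

/-! ### Directed four-cycles -/

def CycF (A : V → V → Prop) (p q r s : V) : Prop :=
  (A p q ∧ A q r ∧ A r s ∧ A s p) ∨ (A q p ∧ A r q ∧ A s r ∧ A p s)

theorem CycF.rot {A : V → V → Prop} {p q r s : V} (h : CycF A p q r s) : CycF A q r s p := by
  unfold CycF at *; tauto

theorem CycF.refl {A : V → V → Prop} {p q r s : V} (h : CycF A p q r s) : CycF A s r q p := by
  unfold CycF at *; tauto

theorem cyc_aux {A : V → V → Prop} {S : Set V} (hS : Cvx A S) (has : ∀ x y, A x y → ¬ A y x)
    (htri : ∀ x y z, A x y → A y z → ¬ A z x) {p q r s : V} (h1 : A p q) (h2 : A q r)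
    (h3 : A r s) (h4 : A s p) (hp : p ∈ S) (hq : q ∈ S) : r ∈ S ∧ s ∈ S := by
  have hmin : ∀ k, Wk A k q p → 3 ≤ k := by
    intro k hk
    by_contra hlt
    have : k = 0 ∨ k = 1 ∨ k = 2 := by omega
    rcases this with rfl | rfl | rfl
    · simp only [Wk] at hk
      subst hk
      exact has _ _ h1 h1
    · obtain ⟨x, hx, hxp⟩ := hk
      simp only [Wk] at hxp
      subst hxp
      exact has _ _ h1 hx
    · obtain ⟨x, hx, y, hy, hyp⟩ := hk
      simp only [Wk] at hyp
      subst hyp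
      exact htri _ _ _ h1 hx hy
  constructor
  · exact hS.2 q hq p hp r 1 2 (wk_one h2) ⟨s, h3, p, h4, rfl⟩ hmin
  · exact hS.2 q hq p hp s 2 1 ⟨r, h2, s, h3, rfl⟩ (wk_one h4) hmin

theorem CycF.mem {A : V → V → Prop} {S : Set V} (hS : Cvx A S) (has : ∀ x y, A x y → ¬ A y x)
    (htri : ∀ x y z, A x y → A y z → ¬ A z x) {p q r s : V} (h : CycF A p q r s)
    (hp : p ∈ S) (hq : q ∈ S) : r ∈ S ∧ s ∈ S := by
  rcases h with ⟨h1, h2, h3, h4⟩ | ⟨h1, h2, h3, h4⟩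
  · exact cyc_aux hS has htri h1 h2 h3 h4 hp hq
  · exact (cyc_aux hS has htri h1 h4 h3 h2 hq hp).symm

theorem CycF.reach {A : V → V → Prop} {p q r s : V} (h : CycF A p q r s) :
    (∃ k, Wk A k p s) ∧ (∃ k, Wk A k s p) := by
  rcases h with ⟨h1, h2, h3, h4⟩ | ⟨h1, h2, h3, h4⟩
  · exact ⟨⟨3, q, h1, r, h2, s, h3, rfl⟩, ⟨1, wk_one h4⟩⟩
  · exact ⟨⟨1, wk_one h4⟩, ⟨3, r, h3, q, h2, p, h1, rfl⟩⟩

/-! ### Extending a grid by folding -/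

section Retract

variable {V' : Type*}

theorem wk_map {A : V → V → Prop} {A' : V' → V' → Prop} (ρ : V' → V)
    (hρ : ∀ x y, A' x y → A (ρ x) (ρ y)) {k : ℕ} {x y : V'} (h : Wk A' k x y) :
    Wk A k (ρ x) (ρ y) := by
  induction k generalizing x with
  | zero => exact congrArg ρ h
  | succ k ih =>
    obtain ⟨t, ht, hw⟩ := h
    exact ⟨ρ t, hρ _ _ ht, ih hw⟩

/-- Data of an isometric embedding `ι` with retraction `ρ`. -/
structure Retr (A : V → V → Prop) (A' : V' → V' → Prop) (ι : V → V') (ρ : V' → V) : Prop where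
  left : ∀ v, ρ (ι v) = v
  emb : ∀ u v, A u v → A' (ι u) (ι v)
  hom : ∀ x y, A' x y → A (ρ x) (ρ y)

variable {A : V → V → Prop} {A' : V' → V' → Prop} {ι : V → V'} {ρ : V' → V}

theorem Retr.wk (h : Retr A A' ι ρ) {k : ℕ} {u v : V} : Wk A' k (ι u) (ι v) ↔ Wk A k u v := by
  constructor
  · intro hw
    have := wk_map ρ h.hom hw
    rwa [h.left, h.left] at this
  · exact wk_map ι h.emb

theorem Retr.cvx_preimage (h : Retr A A' ι ρ) {S : Set V'} (hS : Cvx A' S)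
    (hne : (ι ⁻¹' S).Nonempty) : Cvx A (ι ⁻¹' S) := by
  refine ⟨hne, fun u hu v hv w i j h1 h2 hm => ?_⟩
  refine hS.2 (ι u) hu (ι v) hv (ι w) i j (h.wk.2 h1) (h.wk.2 h2) fun k hk => hm k (h.wk.1 hk)

theorem Retr.str (h : Retr A A' ι ρ) (hs : Str A)
    (h1 : ∀ x, ∃ v k, Wk A' k x (ι v)) (h2 : ∀ x, ∃ v k, Wk A' k (ι v) x) : Str A' := by
  intro x y
  obtain ⟨v, k, hv⟩ := h1 x
  obtain ⟨w, l, hw⟩ := h2 y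
  obtain ⟨m, hm⟩ := hs v w
  exact ⟨_, wk_append (wk_append hv (h.wk.2 hm)) hw⟩

/-- A walk from outside the range of `ι` into the range enters it at a vertex of `C`. -/
theorem first_entry {C : Set V} (h1 : ∀ x v, x ∉ Set.range ι → A' x (ι v) → v ∈ C) {i : ℕ}
    {x : V'} {w : V} (hx : x ∉ Set.range ι) (hw : Wk A' i x (ι w)) :
    ∃ c ∈ C, ∃ a b, a + b = i ∧ Wk A' a x (ι c) ∧ Wk A' b (ι c) (ι w) := by
  induction i generalizing x with
  | zero => exact absurd ⟨w, hw.symm⟩ hx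
  | succ i ih =>
    obtain ⟨y, hy, hyw⟩ := hw
    by_cases hr : y ∈ Set.range ι
    · obtain ⟨c, rfl⟩ := hr
      exact ⟨c, h1 x c hx hy, 1, i, by omega, wk_one hy, hyw⟩
    · obtain ⟨c, hc, a, b, hab, ha, hb⟩ := ih hr hyw
      exact ⟨c, hc, a + 1, b, by omega, ⟨y, hy, ha⟩, hb⟩

theorem last_exit {C : Set V} (h1 : ∀ x v, x ∉ Set.range ι → A' (ι v) x → v ∈ C) {i : ℕ}
    {x : V'} {w : V} (hx : x ∉ Set.range ι) (hw : Wk A' i (ι w) x) :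
    ∃ c ∈ C, ∃ a b, a + b = i ∧ Wk A' a (ι w) (ι c) ∧ Wk A' b (ι c) x := by
  induction i generalizing x with
  | zero => exact absurd ⟨w, hw⟩ hx
  | succ i ih =>
    obtain ⟨y, hyw, hy⟩ := wk_succ_right hw
    by_cases hr : y ∈ Set.range ι
    · obtain ⟨c, rfl⟩ := hr
      exact ⟨c, h1 x c hx hy, i, 1, by omega, hyw, wk_one hy⟩
    · obtain ⟨c, hc, a, b, hab, ha, hb⟩ := ih hr hyw
      exact ⟨c, hc, a, b + 1, by omega, ha, wk_snoc hb hy⟩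

theorem last_arc {i : ℕ} {x : V'} {u : V} (hx : x ∉ Set.range ι) (hw : Wk A' i (ι u) x) :
    ∃ c y a b, a + 1 + b = i ∧ y ∉ Set.range ι ∧ Wk A' a (ι u) (ι c) ∧ A' (ι c) y ∧
      Wk A' b y x := by
  induction i generalizing x with
  | zero => exact absurd ⟨u, hw⟩ hx
  | succ i ih =>
    obtain ⟨y, hyw, hy⟩ := wk_succ_right hw
    by_cases hr : y ∈ Set.range ι
    · obtain ⟨c, rfl⟩ := hr
      exact ⟨c, x, i, 0, by omega, hx, hyw, hy, rfl⟩
    · obtain ⟨c, z, a, b, hab, hz, ha, hcz, hb⟩ := ih hr hyw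
      exact ⟨c, z, a, b + 1, by omega, hz, ha, hcz, wk_snoc hb hy⟩

/-- Extension that enlarges `C` by all new vertices. -/
theorem Good.extend (h : Retr A A' ι ρ) {C : Set V} (hg : Good A C) (hs : Str A')
    (hadj : ∀ x v, x ∉ Set.range ι → A' x (ι v) ∨ A' (ι v) x → v ∈ C)
    (hfull : ∀ S, Cvx A' S → Set.range ι ⊆ S → S = Set.univ) :
    Good A' (ι '' C ∪ (Set.range ι)ᶜ) := by
  have inj : Function.Injective ι := Function.LeftInverse.injective h.left
  have key : ∀ v, ι v ∈ ι '' C ∪ (Set.range ι)ᶜ ↔ v ∈ C := by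
    intro v
    constructor
    · rintro (⟨c, hc, hcv⟩ | hh)
      · rwa [← inj hcv]
      · exact absurd ⟨v, rfl⟩ hh
    · intro hv
      exact Or.inl ⟨v, hv, rfl⟩
  refine ⟨hs, ⟨?_, ?_⟩, ?_, ?_⟩
  · obtain ⟨c, hc⟩ := hg.cvx.1
    exact ⟨ι c, (key c).2 hc⟩
  · intro u hu v hv w i j h1 h2 hm
    by_cases hw : w ∈ Set.range ι
    swap
    · exact Or.inr hw
    obtain ⟨w, rfl⟩ := hw
    rw [key]
    obtain ⟨c, hc, a, b, hab, ha, hb⟩ : ∃ c ∈ C, ∃ a b, a + b = i ∧ Wk A' a u (ι c) ∧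
        Wk A' b (ι c) (ι w) := by
      by_cases hu' : u ∈ Set.range ι
      · obtain ⟨u, rfl⟩ := hu'
        exact ⟨u, (key u).1 hu, 0, i, by omega, rfl, h1⟩
      · exact first_entry (fun x v hx hv => hadj x v hx (Or.inl hv)) hu' h1
    obtain ⟨c', hc', a', b', hab', ha', hb'⟩ : ∃ c ∈ C, ∃ a b, a + b = j ∧
        Wk A' a (ι w) (ι c) ∧ Wk A' b (ι c) v := by
      by_cases hv' : v ∈ Set.range ι
      · obtain ⟨v, rfl⟩ := hv'
        exact ⟨v, (key v).1 hv, j, 0, by omega, h2, rfl⟩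
      · exact last_exit (fun x v hx hv => hadj x v hx (Or.inr hv)) hv' h2
    refine hg.cvx.2 c hc c' hc' w b a' (h.wk.1 hb) (h.wk.1 ha') fun k hk => ?_
    have := hm (a + k + b') (wk_append (wk_append ha (h.wk.2 hk)) hb')
    omega
  · intro hu
    apply hg.ne
    ext v
    simp only [Set.mem_univ, iff_true]
    rw [← key, hu]
    trivial
  · intro S hS x hx y hy hxy hnot
    have hx' : x ∈ Set.range ι := by
      by_contra hx'
      apply hnot
      refine ⟨Or.inr hx', ?_⟩
      by_cases hy' : y ∈ Set.range ι
      · obtain ⟨y, rfl⟩ := hy'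
        exact (key y).2 (hadj x y hx' (Or.inl hxy))
      · exact Or.inr hy'
    have hy' : y ∈ Set.range ι := by
      by_contra hy'
      apply hnot
      refine ⟨?_, Or.inr hy'⟩
      obtain ⟨x, rfl⟩ := hx'
      exact (key x).2 (hadj y x hy' (Or.inr hxy))
    obtain ⟨x, rfl⟩ := hx'
    obtain ⟨y, rfl⟩ := hy'
    rw [key, key] at hnot
    have hxy' : A x y := by
      have := h.hom _ _ hxy
      rwa [h.left, h.left] at this
    have := hg.hull (ι ⁻¹' S) (h.cvx_preimage hS ⟨x, hx⟩) x hx y hy hxy' hnot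
    apply hfull S hS
    rintro _ ⟨v, rfl⟩
    have : v ∈ ι ⁻¹' S := by rw [this]; trivial
    exact this

/-- Extension that keeps `C`. -/
theorem Good.keep (h : Retr A A' ι ρ) {C : Set V} (hg : Good A C) (hs : Str A')
    (hnew : ∃ x, x ∉ Set.range ι)
    (hadj : ∀ x v, x ∉ Set.range ι → A' (ι v) x → ¬ (v ∈ C ∧ ρ x ∈ C))
    (hfull : ∀ S, Cvx A' S → Set.range ι ⊆ S → S = Set.univ)
    (harc : ∀ S, Cvx A' S → ∀ x ∈ S, ∀ y ∈ S, A' x y →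
      (x ∉ Set.range ι ∨ y ∉ Set.range ι) →
      ∃ u v, ι u ∈ S ∧ ι v ∈ S ∧ A u v ∧ ¬ (u ∈ C ∧ v ∈ C)) :
    Good A' (ι '' C) := by
  have inj : Function.Injective ι := Function.LeftInverse.injective h.left
  have key : ∀ v, ι v ∈ ι '' C ↔ v ∈ C := by
    intro v
    constructor
    · rintro ⟨c, hc, hcv⟩
      rwa [← inj hcv]
    · intro hv
      exact ⟨v, hv, rfl⟩
  refine ⟨hs, ⟨hg.cvx.1.image ι, ?_⟩, ?_, ?_⟩
  · rintro _ ⟨u, hu, rfl⟩ _ ⟨v, hv, rfl⟩ w i j h1 h2 hm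
    by_cases hw : w ∈ Set.range ι
    · obtain ⟨w, rfl⟩ := hw
      rw [key]
      exact hg.cvx.2 u hu v hv w i j (h.wk.1 h1) (h.wk.1 h2) fun k hk => hm k (h.wk.2 hk)
    · exfalso
      obtain ⟨c, y, a, b, hab, hy, ha, hcy, hb⟩ := last_arc hw h1
      have pc := wk_map ρ h.hom h2
      have pb := wk_map ρ h.hom hb
      have py := h.hom _ _ hcy
      rw [h.left] at pc py
      apply hadj y c hy hcy
      constructor
      · refine hg.cvx.2 u hu v hv c a (1 + b + j) (h.wk.1 ha)
          (wk_append (wk_append (wk_one py) pb) pc) fun k hk => ?_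
        have := hm k (h.wk.2 hk)
        omega
      · refine hg.cvx.2 u hu v hv (ρ y) (a + 1) (b + j) (wk_snoc (h.wk.1 ha) py)
          (wk_append pb pc) fun k hk => ?_
        have := hm k (h.wk.2 hk)
        omega
  · intro hu
    obtain ⟨x, hx⟩ := hnew
    apply hx
    have : x ∈ ι '' C := by rw [hu]; trivial
    obtain ⟨v, _, hv⟩ := this
    exact ⟨v, hv⟩
  · intro S hS x hx y hy hxy hnot
    obtain ⟨u, v, hu, hv, huv, hn⟩ : ∃ u v, ι u ∈ S ∧ ι v ∈ S ∧ A u v ∧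
        ¬ (u ∈ C ∧ v ∈ C) := by
      by_cases hr : x ∈ Set.range ι ∧ y ∈ Set.range ι
      · obtain ⟨⟨x, rfl⟩, ⟨y, rfl⟩⟩ := hr
        rw [key, key] at hnot
        have hxy' : A x y := by
          have := h.hom _ _ hxy
          rwa [h.left, h.left] at this
        exact ⟨x, y, hx, hy, hxy', hnot⟩
      · exact harc S hS x hx y hy hxy (by tauto)
    have := hg.hull (ι ⁻¹' S) (h.cvx_preimage hS ⟨u, hu⟩) u hu v hv huv hn
    apply hfull S hS
    rintro _ ⟨v, rfl⟩
    have : v ∈ ι ⁻¹' S := by rw [this]; trivial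
    exact this

end Retract

/-! ### Grids -/

theorem grid_adj {n m : ℕ} (x y : Fin n × Fin m) : (gridGraph n m).Adj x y ↔
    ((x.1.val + 1 = y.1.val ∨ y.1.val + 1 = x.1.val) ∧ x.2 = y.2) ∨
    ((x.2.val + 1 = y.2.val ∨ y.2.val + 1 = x.2.val) ∧ x.1 = y.1) := by
  unfold gridGraph
  rw [SimpleGraph.boxProd_adj, SimpleGraph.pathGraph_adj, SimpleGraph.pathGraph_adj]

theorem orient_tri {n m : ℕ} {A : Fin n × Fin m → Fin n × Fin m → Prop}
    (h : IsOrientation (gridGraph n m) A) (x y z : Fin n × Fin m) (h1 : A x y) (h2 : A y z) :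
    ¬ A z x := by
  intro h3
  have a1 := (grid_adj _ _).1 (h.1 _ _ h1)
  have a2 := (grid_adj _ _).1 (h.1 _ _ h2)
  have a3 := (grid_adj _ _).1 (h.1 _ _ h3)
  simp only [Fin.ext_iff] at a1 a2 a3
  omega

/-- Two consecutive rows `l`, `l2` all of whose faces are directed cycles. -/
def CycRows {n : ℕ} (A : Fin n × Fin 4 → Fin n × Fin 4 → Prop) (l l2 : Fin n) : Prop :=
  ∀ j j' : Fin 4, j.val + 1 = j'.val → CycF A (l2, j) (l2, j') (l, j') (l, j)

/-- Adding one row to the path of rows, next to row `l`. -/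
structure RowExt (n : ℕ) where
  e : Fin n → Fin (n + 1)
  r : Fin (n + 1) → Fin n
  z : Fin (n + 1)
  l : Fin n
  l2 : Fin n
  re : ∀ i, r (e i) = i
  rz : r z = l2
  cover : ∀ x, x ≠ z → ∃ i, x = e i
  nz : ∀ i, e i ≠ z
  adj_e : ∀ i j, ((e i).val + 1 = (e j).val ∨ (e j).val + 1 = (e i).val) ↔
    (i.val + 1 = j.val ∨ j.val + 1 = i.val)
  adj_z : ∀ i, (z.val + 1 = (e i).val ∨ (e i).val + 1 = z.val) ↔ i = l
  ll : l.val + 1 = l2.val ∨ l2.val + 1 = l.val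

namespace RowExt

variable {n : ℕ} (R : RowExt n)

def emb (x : Fin n × Fin 4) : Fin (n + 1) × Fin 4 := (R.e x.1, x.2)
def fold (x : Fin (n + 1) × Fin 4) : Fin n × Fin 4 := (R.r x.1, x.2)
def arcs (A : Fin n × Fin 4 → Fin n × Fin 4 → Prop) (x y : Fin (n + 1) × Fin 4) : Prop :=
  (gridGraph (n + 1) 4).Adj x y ∧ A (R.fold x) (R.fold y)

theorem mem_range (x : Fin (n + 1) × Fin 4) : x ∈ Set.range R.emb ↔ x.1 ≠ R.z := by
  constructor
  · rintro ⟨y, rfl⟩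
    exact R.nz _
  · intro h
    obtain ⟨i, hi⟩ := R.cover _ h
    exact ⟨(i, x.2), by ext1 <;> simp [emb, hi]⟩

theorem e_inj {i j : Fin n} (h : R.e i = R.e j) : i = j := by
  rw [← R.re i, h, R.re]

theorem fold_adj {x y : Fin (n + 1) × Fin 4} (h : (gridGraph (n + 1) 4).Adj x y) :
    (gridGraph n 4).Adj (R.fold x) (R.fold y) := by
  rw [grid_adj] at *
  obtain ⟨i, a⟩ := x
  obtain ⟨j, b⟩ := y
  simp only [fold] at *
  rcases h with ⟨h, rfl⟩ | ⟨h, rfl⟩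
  · left
    refine ⟨?_, rfl⟩
    by_cases hi : i = R.z
    · subst hi
      by_cases hj : j = R.z
      · subst hj; omega
      · obtain ⟨j, rfl⟩ := R.cover _ hj
        have := (R.adj_z j).1 h
        subst this
        rw [R.rz, R.re]
        exact R.ll.symm
    · obtain ⟨i, rfl⟩ := R.cover _ hi
      by_cases hj : j = R.z
      · subst hj
        have := (R.adj_z i).1 h.symm
        subst this
        rw [R.rz, R.re]
        exact R.ll
      · obtain ⟨j, rfl⟩ := R.cover _ hj
        rw [R.re, R.re]
        exact (R.adj_e _ _).1 h
  · right
    exact ⟨h, rfl⟩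

theorem orient {A : Fin n × Fin 4 → Fin n × Fin 4 → Prop}
    (h : IsOrientation (gridGraph n 4) A) : IsOrientation (gridGraph (n + 1) 4) (R.arcs A) := by
  refine ⟨fun x y hxy => hxy.1, fun x y hxy => ?_, fun x y hxy hyx => h.2.2 _ _ hxy.2 hyx.2⟩
  rcases h.2.1 _ _ (R.fold_adj hxy) with h' | h'
  · exact Or.inl ⟨hxy, h'⟩
  · exact Or.inr ⟨hxy.symm, h'⟩

theorem fold_emb (x : Fin n × Fin 4) : R.fold (R.emb x) = x := by
  simp [fold, emb, R.re]

theorem retr {A : Fin n × Fin 4 → Fin n × Fin 4 → Prop}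
    (h : IsOrientation (gridGraph n 4) A) : Retr A (R.arcs A) R.emb R.fold := by
  refine ⟨R.fold_emb, ?_, fun x y hxy => hxy.2⟩
  intro u v huv
  refine ⟨?_, by rwa [R.fold_emb, R.fold_emb]⟩
  have := (grid_adj _ _).1 (h.1 _ _ huv)
  rw [grid_adj]
  simp only [emb]
  rcases this with ⟨h, h'⟩ | ⟨h, h'⟩
  · exact Or.inl ⟨(R.adj_e _ _).2 h, h'⟩
  · exact Or.inr ⟨h, by rw [h']⟩

theorem cyc_old {A : Fin n × Fin 4 → Fin n × Fin 4 → Prop}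
    (h : IsOrientation (gridGraph n 4) A) {a b : Fin n} (hc : CycRows A a b) :
    CycRows (R.arcs A) (R.e a) (R.e b) := by
  intro j j' hj
  have := (R.retr h).emb
  have hc := hc j j' hj
  unfold CycF at *
  rcases hc with ⟨h1, h2, h3, h4⟩ | ⟨h1, h2, h3, h4⟩
  · exact Or.inl ⟨this _ _ h1, this _ _ h2, this _ _ h3, this _ _ h4⟩
  · exact Or.inr ⟨this _ _ h1, this _ _ h2, this _ _ h3, this _ _ h4⟩

theorem cyc_new {A : Fin n × Fin 4 → Fin n × Fin 4 → Prop}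
    (hc : CycRows A R.l R.l2) : CycRows (R.arcs A) R.z (R.e R.l) := by
  intro j j' hj
  have hc := (hc j j' hj)
  have a1 : (gridGraph (n + 1) 4).Adj (R.e R.l, j) (R.e R.l, j') := by
    rw [grid_adj]; exact Or.inr ⟨Or.inl hj, rfl⟩
  have a3 : (gridGraph (n + 1) 4).Adj (R.z, j') (R.z, j) := by
    rw [grid_adj]; exact Or.inr ⟨Or.inr hj, rfl⟩
  have a2 : ∀ j, (gridGraph (n + 1) 4).Adj (R.e R.l, j) (R.z, j) := by
    intro j; rw [grid_adj]; exact Or.inl ⟨((R.adj_z _).2 rfl).symm, rfl⟩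
  have f1 : ∀ j, R.fold (R.e R.l, j) = (R.l, j) := fun j => by simp [fold, R.re]
  have f2 : ∀ j, R.fold (R.z, j) = (R.l2, j) := fun j => by simp [fold, R.rz]
  unfold CycF arcs at *
  simp only [f1, f2]
  rcases hc with ⟨h1, h2, h3, h4⟩ | ⟨h1, h2, h3, h4⟩
  · exact Or.inr ⟨⟨a1.symm, h3⟩, ⟨(a2 j').symm, h2⟩, ⟨a3.symm, h1⟩, ⟨a2 j, h4⟩⟩
  · exact Or.inl ⟨⟨a1, h3⟩, ⟨a2 j', h2⟩, ⟨a3, h1⟩, ⟨(a2 j).symm, h4⟩⟩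

end RowExt

theorem fin4_nbr (j : Fin 4) : ∃ j' : Fin 4, j.val + 1 = j'.val ∨ j'.val + 1 = j.val := by
  fin_cases j
  · exact ⟨1, by simp⟩
  · exact ⟨0, by simp⟩
  · exact ⟨1, by simp⟩
  · exact ⟨2, by simp⟩

theorem CycRows.any {n : ℕ} {A : Fin n × Fin 4 → Fin n × Fin 4 → Prop} {l l2 : Fin n}
    (h : CycRows A l l2) {j j' : Fin 4} (hj : j.val + 1 = j'.val ∨ j'.val + 1 = j.val) :
    CycF A (l2, j) (l2, j') (l, j') (l, j) := by
  rcases hj with hj | hj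
  · exact h j j' hj
  · exact (h j' j hj).rot.refl.rot.rot.rot

namespace RowExt

variable {n : ℕ} (R : RowExt n) {A : Fin n × Fin 4 → Fin n × Fin 4 → Prop}

theorem str (h : IsOrientation (gridGraph n 4) A) (hc : CycRows A R.l R.l2) (hs : Str A) :
    Str (R.arcs A) := by
  have key : ∀ j, (∃ k, Wk (R.arcs A) k (R.emb (R.l, j)) (R.z, j)) ∧
      (∃ k, Wk (R.arcs A) k (R.z, j) (R.emb (R.l, j))) := by
    intro j
    obtain ⟨j', hj⟩ := fin4_nbr j
    exact ((R.cyc_new hc).any hj).reach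
  refine (R.retr h).str hs ?_ ?_
  · intro x
    by_cases hx : x ∈ Set.range R.emb
    · obtain ⟨v, rfl⟩ := hx
      exact ⟨v, 0, rfl⟩
    · rw [R.mem_range, not_not] at hx
      obtain ⟨i, j⟩ := x
      simp only at hx
      subst hx
      exact ⟨_, (key j).2⟩
  · intro x
    by_cases hx : x ∈ Set.range R.emb
    · obtain ⟨v, rfl⟩ := hx
      exact ⟨v, 0, rfl⟩
    · rw [R.mem_range, not_not] at hx
      obtain ⟨i, j⟩ := x
      simp only at hx
      subst hx
      exact ⟨_, (key j).1⟩

theorem full (h : IsOrientation (gridGraph n 4) A) (hc : CycRows A R.l R.l2)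
    (S : Set (Fin (n + 1) × Fin 4)) (hS : Cvx (R.arcs A) S) (hr : Set.range R.emb ⊆ S) :
    S = Set.univ := by
  have ho := R.orient h
  ext x
  simp only [Set.mem_univ, iff_true]
  by_cases hx : x ∈ Set.range R.emb
  · exact hr hx
  · rw [R.mem_range, not_not] at hx
    obtain ⟨i, j⟩ := x
    simp only at hx
    subst hx
    obtain ⟨j', hj⟩ := fin4_nbr j
    exact (((R.cyc_new hc).any hj).mem hS ho.2.2 (orient_tri ho) (hr ⟨(R.l, j), rfl⟩)
      (hr ⟨(R.l, j'), rfl⟩)).2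

theorem new_adj {x : Fin (n + 1) × Fin 4} {v : Fin n × Fin 4} (hx : x ∉ Set.range R.emb)
    (h : (gridGraph (n + 1) 4).Adj x (R.emb v)) : v = (R.l, x.2) ∧ x = (R.z, x.2) := by
  rw [R.mem_range, not_not] at hx
  rw [grid_adj] at h
  obtain ⟨i, j⟩ := x
  obtain ⟨a, b⟩ := v
  simp only at hx
  subst hx
  simp only [emb] at h
  rcases h with ⟨h, rfl⟩ | ⟨h, h'⟩
  · rw [(R.adj_z a).1 h]
    exact ⟨rfl, rfl⟩
  · exact absurd h'.symm (R.nz a)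

theorem good_extend (h : IsOrientation (gridGraph n 4) A) (hc : CycRows A R.l R.l2)
    {C : Set (Fin n × Fin 4)} (hg : Good A C) (hrow : ∀ j, (R.l, j) ∈ C) :
    Good (R.arcs A) (R.emb '' C ∪ (Set.range R.emb)ᶜ) := by
  refine Good.extend (R.retr h) hg (R.str h hc hg.str) ?_ (R.full h hc)
  intro x v hx hxv
  have hadj : (gridGraph (n + 1) 4).Adj x (R.emb v) := by
    rcases hxv with hh | hh
    · exact hh.1
    · exact hh.1.symm
  rw [(R.new_adj hx hadj).1]
  exact hrow _

theorem good_keep (h : IsOrientation (gridGraph n 4) A) (hc : CycRows A R.l R.l2)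
    {C : Set (Fin n × Fin 4)} (hg : Good A C) (h1 : ∀ j, ¬ ((R.l, j) ∈ C ∧ (R.l2, j) ∈ C))
    (h2 : ∀ j j' : Fin 4, j.val + 1 = j'.val → ¬ ((R.l, j) ∈ C ∧ (R.l, j') ∈ C)) :
    Good (R.arcs A) (R.emb '' C) := by
  have ho := R.orient h
  have h2' : ∀ j j' : Fin 4, (j.val + 1 = j'.val ∨ j'.val + 1 = j.val) →
      ¬ ((R.l, j) ∈ C ∧ (R.l, j') ∈ C) := by
    rintro j j' (hj | hj) hh
    · exact h2 j j' hj hh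
    · exact h2 j' j hj hh.symm
  refine Good.keep (R.retr h) hg (R.str h hc hg.str) ⟨(R.z, 0), ?_⟩ ?_ (R.full h hc) ?_
  · rw [R.mem_range]; simp
  · intro x v hx hvx hh
    obtain ⟨e1, e2⟩ := R.new_adj hx hvx.1.symm
    rw [e1, e2] at hh
    apply h1 x.2
    simpa [fold, R.rz] using hh
  · intro S hS x hx y hy hxy hn
    -- both ends of a horizontal edge of row `l` lie in `S`
    suffices hh : ∃ j j' : Fin 4, (j.val + 1 = j'.val ∨ j'.val + 1 = j.val) ∧
        R.emb (R.l, j) ∈ S ∧ R.emb (R.l, j') ∈ S by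
      obtain ⟨j, j', hj, hjS, hjS'⟩ := hh
      have ha : (gridGraph n 4).Adj (R.l, j) (R.l, j') := by
        rw [grid_adj]; exact Or.inr ⟨hj, rfl⟩
      rcases h.2.1 _ _ ha with hA | hA
      · exact ⟨_, _, hjS, hjS', hA, h2' _ _ hj⟩
      · exact ⟨_, _, hjS', hjS, hA, h2' _ _ hj.symm⟩
    have vert : ∀ j, (R.z, j) ∈ S → R.emb (R.l, j) ∈ S → ∃ j j' : Fin 4,
        (j.val + 1 = j'.val ∨ j'.val + 1 = j.val) ∧
        R.emb (R.l, j) ∈ S ∧ R.emb (R.l, j') ∈ S := by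
      intro j hz hl
      obtain ⟨j', hj⟩ := fin4_nbr j
      refine ⟨j, j', hj, hl, ?_⟩
      exact (((R.cyc_new hc).any hj).rot.rot.rot.mem hS ho.2.2 (orient_tri ho) hz hl).1
    by_cases hx' : x ∈ Set.range R.emb
    · by_cases hy' : y ∈ Set.range R.emb
      · tauto
      · obtain ⟨v, rfl⟩ := hx'
        obtain ⟨e1, e2⟩ := R.new_adj hy' hxy.1.symm
        rw [e1] at hx
        rw [e2] at hy
        exact vert _ hy hx
    · by_cases hy' : y ∈ Set.range R.emb
      · obtain ⟨v, rfl⟩ := hy'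
        obtain ⟨e1, e2⟩ := R.new_adj hx' hxy.1
        rw [e1] at hy
        rw [e2] at hx
        exact vert _ hx hy
      · rw [R.mem_range, not_not] at hx' hy'
        obtain ⟨i, j⟩ := x
        obtain ⟨i', j'⟩ := y
        simp only at hx' hy'
        subst hx'
        subst hy'
        have ha := hxy.1
        rw [grid_adj] at ha
        simp only at ha
        have hj : j.val + 1 = j'.val ∨ j'.val + 1 = j.val := by
          rcases ha with ⟨h, _⟩ | ⟨h, _⟩
          · omega
          · exact h
        obtain ⟨ha, hb⟩ := ((R.cyc_new hc).any hj).rot.rot.mem hS ho.2.2 (orient_tri ho) hy hx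
        exact ⟨j, j', hj, ha, hb⟩

theorem ncard_keep (C : Set (Fin n × Fin 4)) : (R.emb '' C).ncard = C.ncard :=
  Set.ncard_image_of_injective _ (Function.LeftInverse.injective R.fold_emb)

theorem ncard_extend (C : Set (Fin n × Fin 4)) :
    (R.emb '' C ∪ (Set.range R.emb)ᶜ).ncard = C.ncard + 4 := by
  have hinj : Function.Injective R.emb := Function.LeftInverse.injective R.fold_emb
  rw [Set.ncard_union_eq ?_ (Set.toFinite _) (Set.toFinite _), R.ncard_keep, Set.ncard_compl,
    Set.ncard_range_of_injective hinj]
  · simp only [Nat.card_eq_fintype_card, Fintype.card_prod, Fintype.card_fin]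
    omega
  · rw [Set.disjoint_compl_right_iff_subset]
    exact Set.image_subset_range _ _

/-- New row after the last one. -/
def bot (n : ℕ) (hn : 2 ≤ n) : RowExt n where
  e := Fin.castSucc
  r i := if h : i.val < n then ⟨i.val, h⟩ else ⟨n - 2, by omega⟩
  z := Fin.last n
  l := ⟨n - 1, by omega⟩
  l2 := ⟨n - 2, by omega⟩
  re i := by simp
  rz := by simp
  cover x hx := ⟨x.castPred hx, by simp⟩
  nz i := by simp [Fin.ext_iff]; omega
  adj_e i j := by simp
  adj_z i := by simp [Fin.ext_iff]; omega
  ll := by simp; omega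

/-- New row before the first one. -/
def top (n : ℕ) (hn : 2 ≤ n) : RowExt n where
  e := Fin.succ
  r i := if h : i.val = 0 then ⟨1, by omega⟩ else ⟨i.val - 1, by omega⟩
  z := 0
  l := ⟨0, by omega⟩
  l2 := ⟨1, by omega⟩
  re i := by simp
  rz := by simp
  cover x hx := ⟨x.pred hx, by simp⟩
  nz i := by simp
  adj_e i j := by simp
  adj_z i := by simp [Fin.ext_iff]
  ll := by simp

end RowExt

/-! ### The predicates used in the induction -/

def TopOK {n : ℕ} (A : Fin n × Fin 4 → Fin n × Fin 4 → Prop) (C : Set (Fin n × Fin 4)) : Prop :=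
  ∀ l l2 : Fin n, l.val = 0 → l2.val = 1 → CycRows A l l2 ∧ ∀ j, (l, j) ∈ C

def BotOK {n : ℕ} (A : Fin n × Fin 4 → Fin n × Fin 4 → Prop) (C : Set (Fin n × Fin 4)) : Prop :=
  ∀ l l2 : Fin n, l.val + 1 = n → l2.val + 2 = n → CycRows A l l2 ∧
    (∀ j, ¬ ((l, j) ∈ C ∧ (l2, j) ∈ C)) ∧
    (∀ j j' : Fin 4, j.val + 1 = j'.val → ¬ ((l, j) ∈ C ∧ (l, j') ∈ C))

def Realz (n k : ℕ) (t b : Prop) : Prop :=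
  ∃ (A : Fin n × Fin 4 → Fin n × Fin 4 → Prop) (C : Set (Fin n × Fin 4)),
    IsOrientation (gridGraph n 4) A ∧ Good A C ∧ C.ncard = k ∧ (t → TopOK A C) ∧
      (b → BotOK A C)

theorem Realz.extend {n k : ℕ} {b : Prop} (hn : 2 ≤ n) (h : Realz n k True b) :
    Realz (n + 1) (k + 4) True b := by
  obtain ⟨A, C, ho, hg, hk, ht, hb⟩ := h
  let R := RowExt.top n hn
  have inj : Function.Injective R.emb := Function.LeftInverse.injective R.fold_emb
  obtain ⟨hc, hrow⟩ := ht trivial R.l R.l2 rfl rfl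
  have key : ∀ v, R.emb v ∈ R.emb '' C ∪ (Set.range R.emb)ᶜ ↔ v ∈ C := by
    intro v
    constructor
    · rintro (⟨c, hc, hcv⟩ | hh)
      · rwa [← inj hcv]
      · exact absurd ⟨v, rfl⟩ hh
    · intro hv
      exact Or.inl ⟨v, hv, rfl⟩
  refine ⟨R.arcs A, R.emb '' C ∪ (Set.range R.emb)ᶜ, R.orient ho, R.good_extend ho hc hg hrow,
    by rw [R.ncard_extend, hk], ?_, ?_⟩
  · rintro - l l2 hl hl2
    have e1 : l = R.z := by apply Fin.ext; exact hl
    have e2 : l2 = R.e R.l := by apply Fin.ext; exact hl2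
    subst e1
    subst e2
    refine ⟨R.cyc_new hc, fun j => Or.inr ?_⟩
    rw [Set.mem_compl_iff, R.mem_range]
    simp
  · intro hb' l l2 hl hl2
    obtain ⟨p, hp⟩ : ∃ p : Fin n, p.val = n - 1 := ⟨⟨n - 1, by omega⟩, rfl⟩
    obtain ⟨q, hq⟩ : ∃ q : Fin n, q.val = n - 2 := ⟨⟨n - 2, by omega⟩, rfl⟩
    have e1 : l = R.e p := by apply Fin.ext; show l.val = p.val + 1; omega
    have e2 : l2 = R.e q := by apply Fin.ext; show l2.val = q.val + 1; omega
    obtain ⟨hc', h1, h2⟩ := hb hb' p q (by omega) (by omega)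
    subst e1
    subst e2
    refine ⟨R.cyc_old ho hc', fun j hh => ?_, fun j j' hj hh => ?_⟩
    · exact h1 j ⟨(key (p, j)).1 hh.1, (key (q, j)).1 hh.2⟩
    · exact h2 j j' hj ⟨(key (p, j)).1 hh.1, (key (p, j')).1 hh.2⟩

theorem Realz.keep {n k : ℕ} {t : Prop} (hn : 2 ≤ n) (h : Realz n k t True) :
    Realz (n + 1) k False True := by
  obtain ⟨A, C, ho, hg, hk, -, hb⟩ := h
  let R := RowExt.bot n hn
  obtain ⟨hc, h1, h2⟩ := hb trivial R.l R.l2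
    (by show n - 1 + 1 = n; omega) (by show n - 2 + 2 = n; omega)
  have key : ∀ j, (R.z, j) ∉ R.emb '' C := by
    rintro j ⟨v, -, hv⟩
    exact R.nz v.1 (congrArg Prod.fst hv)
  refine ⟨R.arcs A, R.emb '' C, R.orient ho, R.good_keep ho hc hg h1 h2,
    by rw [R.ncard_keep, hk], False.elim, ?_⟩
  rintro - l l2 hl hl2
  have e1 : l = R.z := by apply Fin.ext; show l.val = n; omega
  have e2 : l2 = R.e R.l := by apply Fin.ext; show l2.val = n - 1; omega
  subst e1
  subst e2
  exact ⟨R.cyc_new hc, fun j hh => key j hh.1, fun j j' _ hh => key j hh.1⟩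

theorem Realz.extends {n k : ℕ} {b : Prop} (hn : 2 ≤ n) (h : Realz n k True b) (a : ℕ) :
    Realz (n + a) (k + 4 * a) True b := by
  induction a with
  | zero => exact h
  | succ a ih => exact ih.extend (Nat.le_add_right_of_le hn)

theorem Realz.weaken {n k : ℕ} {t b : Prop} (h : Realz n k t b) : Realz n k False b := by
  obtain ⟨A, C, ho, hg, hk, -, hb⟩ := h
  exact ⟨A, C, ho, hg, hk, False.elim, hb⟩

theorem Realz.keeps {n k : ℕ} {t : Prop} (hn : 2 ≤ n) (h : Realz n k t True) (a : ℕ) :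
    Realz (n + a) k False True := by
  induction a with
  | zero => exact h.weaken
  | succ a ih => exact ih.keep (Nat.le_add_right_of_le hn)

theorem Realz.mem {n k : ℕ} {t b : Prop} (h : Realz n k t b) :
    k ∈ strongConvexitySpectrum (gridGraph n 4) := by
  obtain ⟨A, C, ho, hg, hk, -, -⟩ := h
  exact ⟨A, ho, str_iff.2 hg.str, by rw [hg.conv, hk]⟩

/-! ### Checking concrete orientations -/

namespace Chk

/-- Orientation given by two bit masks: `h` for edges inside rows, `v` for edges between rows. -/
def arcB (h v a b : ℕ) : Bool :=
  (b == a + 1 && a % 4 != 3 && h.testBit a) || (a == b + 1 && b % 4 != 3 && !h.testBit b) ||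
  (b == a + 4 && v.testBit a) || (a == b + 4 && !v.testBit b)

def dd (D u v : ℕ) : ℕ := (D >>> (4 * (24 * u + v))) % 16

def chkDist (N h v D : ℕ) : Bool :=
  (List.range N).all fun x => (dd D x x == 0) && (List.range N).all fun y =>
    (!arcB h v x y || (List.range N).all fun u => Nat.ble (dd D u y) (dd D u x + 1)) &&
    ((x == y) || [y - 1, y + 1, y - 4, y + 4].any fun t =>
      Nat.blt t N && arcB h v t y && (dd D x t + 1 == dd D x y))

def chkCvx (N D c : ℕ) : Bool :=
  (List.range N).all fun u => !c.testBit u || (List.range N).all fun v => !c.testBit v ||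
    (List.range N).all fun w => c.testBit w || !(dd D u w + dd D w v == dd D u v)

def clos (N D : ℕ) (S : List ℕ) : List ℕ :=
  (List.range N).filter fun w => S.contains w ||
    S.any fun u => S.any fun v => dd D u w + dd D w v == dd D u v

def grow (N D : ℕ) (known : List (ℕ × ℕ)) : ℕ → List ℕ → Bool
  | 0, _ => false
  | f + 1, S => known.any (fun e => S.contains e.1 && S.contains e.2) ||
      (List.range N).all (fun w => S.contains w) || grow N D known f (clos N D S)

def hulls (N D : ℕ) : List (ℕ × ℕ) → List (ℕ × ℕ) → Bool
  | _, [] => true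
  | known, e :: es => grow N D known 8 [e.1, e.2] && hulls N D (e :: known) es

def chkArcs (N h v : ℕ) (inside : ℕ → ℕ → Bool) (es : List (ℕ × ℕ)) : Bool :=
  (List.range N).all fun x => (List.range N).all fun y =>
    !arcB h v x y || inside x y || es.contains (x, y)

def idx {n : ℕ} (x : Fin n × Fin 4) : ℕ := 4 * x.1.val + x.2.val

def Arc {n : ℕ} (h v : ℕ) (x y : Fin n × Fin 4) : Prop := arcB h v (idx x) (idx y) = true

def CC {n : ℕ} (c : ℕ) : Set (Fin n × Fin 4) := {x | c.testBit (idx x) = true}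

theorem idx_lt {n : ℕ} (x : Fin n × Fin 4) : idx x < 4 * n := by
  unfold idx; omega

theorem idx_inj {n : ℕ} {x y : Fin n × Fin 4} (h : idx x = idx y) : x = y := by
  unfold idx at h
  ext
  · omega
  · omega

theorem idx_surj {n w : ℕ} (h : w < 4 * n) : ∃ x : Fin n × Fin 4, idx x = w :=
  ⟨(⟨w / 4, by omega⟩, ⟨w % 4, by omega⟩), by simp only [idx]; omega⟩

theorem orient (n h v : ℕ) : IsOrientation (gridGraph n 4) (Arc (n := n) h v) := by
  refine ⟨?_, ?_, ?_⟩
  · intro x y hxy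
    rw [grid_adj]
    simp only [Arc, arcB, Bool.or_eq_true, Bool.and_eq_true, beq_iff_eq, bne_iff_ne, idx] at hxy
    simp only [Fin.ext_iff]
    omega
  · intro x y hxy
    rw [grid_adj] at hxy
    simp only [Fin.ext_iff] at hxy
    simp only [Arc, arcB, Bool.or_eq_true, Bool.and_eq_true, beq_iff_eq, bne_iff_ne,
      Bool.not_eq_true']
    have hx : idx x = 4 * x.1.val + x.2.val := rfl
    have hy : idx y = 4 * y.1.val + y.2.val := rfl
    have e1 : ∀ m a : ℕ, m.testBit a = true ∨ m.testBit a = false := fun m a => by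
      cases m.testBit a <;> simp
    rcases hxy with ⟨h1 | h1, h2⟩ | ⟨h1 | h1, h2⟩
    · have : idx y = idx x + 4 := by omega
      rcases e1 v (idx x) with hh | hh <;> simp [this, hh]
    · have : idx x = idx y + 4 := by omega
      rcases e1 v (idx y) with hh | hh <;> simp [this, hh]
    · have : idx y = idx x + 1 := by omega
      have h3 : idx x % 4 ≠ 3 := by omega
      rcases e1 h (idx x) with hh | hh <;> simp [this, hh, h3]
    · have : idx x = idx y + 1 := by omega
      have h3 : idx y % 4 ≠ 3 := by omega
      rcases e1 h (idx y) with hh | hh <;> simp [this, hh, h3]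
  · intro x y hxy hyx
    simp only [Arc, arcB, Bool.or_eq_true, Bool.and_eq_true, beq_iff_eq, bne_iff_ne,
      Bool.not_eq_true'] at hxy hyx
    generalize idx x = a at *
    generalize idx y = b at *
    rcases hxy with (((⟨⟨rfl, h1⟩, h2⟩ | ⟨⟨rfl, h1⟩, h2⟩) | ⟨rfl, h2⟩) | ⟨rfl, h2⟩) <;>
      simp_all <;> omega

section

variable {n h v D : ℕ}

theorem dist_zero (hd : chkDist (4 * n) h v D = true) (x : Fin n × Fin 4) :
    dd D (idx x) (idx x) = 0 := by
  simp only [chkDist, List.all_eq_true, List.mem_range, Bool.and_eq_true, beq_iff_eq] at hd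
  exact (hd _ (idx_lt x)).1

theorem dist_step (hd : chkDist (4 * n) h v D = true) (u x y : Fin n × Fin 4)
    (hxy : Arc h v x y) : dd D (idx u) (idx y) ≤ dd D (idx u) (idx x) + 1 := by
  simp only [chkDist, List.all_eq_true, List.mem_range, Bool.and_eq_true, beq_iff_eq,
    Bool.or_eq_true, Bool.not_eq_true', Nat.ble_eq] at hd
  rcases ((hd _ (idx_lt x)).2 _ (idx_lt y)).1 with hh | hh
  · rw [Arc, hh] at hxy; exact absurd hxy (by simp)
  · exact hh _ (idx_lt u)

theorem dist_pred (hd : chkDist (4 * n) h v D = true) (x y : Fin n × Fin 4) (hne : x ≠ y) :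
    ∃ t, Arc h v t y ∧ dd D (idx x) (idx t) + 1 = dd D (idx x) (idx y) := by
  simp only [chkDist, List.all_eq_true, List.mem_range, Bool.and_eq_true, beq_iff_eq,
    Bool.or_eq_true, List.any_eq_true, Nat.blt_eq] at hd
  rcases ((hd _ (idx_lt x)).2 _ (idx_lt y)).2 with hh | ⟨t, -, ⟨ht, ha⟩, he⟩
  · exact absurd (idx_inj hh) hne
  · obtain ⟨t, rfl⟩ := idx_surj ht
    exact ⟨t, ha, he⟩

theorem dist_le (hd : chkDist (4 * n) h v D = true) (u : Fin n × Fin 4) {k : ℕ}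
    {x y : Fin n × Fin 4} (hw : Wk (Arc h v) k x y) :
    dd D (idx u) (idx y) ≤ dd D (idx u) (idx x) + k := by
  induction k generalizing x with
  | zero => simp only [Wk] at hw; subst hw; omega
  | succ k ih =>
    obtain ⟨t, ht, hw⟩ := hw
    have := ih hw
    have := dist_step hd u x t ht
    omega

theorem dist_le' (hd : chkDist (4 * n) h v D = true) {k : ℕ}
    {x y : Fin n × Fin 4} (hw : Wk (Arc h v) k x y) : dd D (idx x) (idx y) ≤ k := by
  have := dist_le hd x hw
  rw [dist_zero hd] at this
  omega

theorem dist_wk (hd : chkDist (4 * n) h v D = true) (x y : Fin n × Fin 4) :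
    Wk (Arc h v) (dd D (idx x) (idx y)) x y := by
  generalize hk : dd D (idx x) (idx y) = k
  induction k generalizing y with
  | zero =>
    by_contra hne
    obtain ⟨t, -, ht⟩ := dist_pred hd x y hne
    omega
  | succ k ih =>
    have hne : x ≠ y := by
      rintro rfl
      rw [dist_zero hd] at hk
      omega
    obtain ⟨t, ha, ht⟩ := dist_pred hd x y hne
    exact wk_snoc (ih t (by omega)) ha

theorem str (hd : chkDist (4 * n) h v D = true) : Str (Arc (n := n) h v) :=
  fun x y => ⟨_, dist_wk hd x y⟩

theorem cvx {c : ℕ} (hd : chkDist (4 * n) h v D = true) (hc : chkCvx (4 * n) D c = true)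
    (hne : (CC (n := n) c).Nonempty) : Cvx (Arc (n := n) h v) (CC c) := by
  refine ⟨hne, fun u hu w hw t i j h1 h2 hm => ?_⟩
  have a := dist_le' hd h1
  have b := dist_le' hd h2
  have e := hm _ (dist_wk hd u w)
  have f := dist_le' hd (wk_append (dist_wk hd u t) (dist_wk hd t w))
  simp only [chkCvx, List.all_eq_true, List.mem_range, Bool.or_eq_true, Bool.not_eq_true',
    beq_eq_false_iff_ne] at hc
  rcases hc _ (idx_lt u) with g | g
  · rw [CC, Set.mem_setOf_eq, g] at hu; exact absurd hu (by simp)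
  rcases g _ (idx_lt w) with g | g
  · rw [CC, Set.mem_setOf_eq, g] at hw; exact absurd hw (by simp)
  rcases g _ (idx_lt t) with g | g
  · exact g
  · omega

theorem clos_sound (hd : chkDist (4 * n) h v D = true) {S : Set (Fin n × Fin 4)}
    (hS : Cvx (Arc h v) S) {L : List ℕ} (hL : ∀ w ∈ L, ∃ x ∈ S, idx x = w) :
    ∀ w ∈ clos (4 * n) D L, ∃ x ∈ S, idx x = w := by
  intro w hw
  simp only [clos, List.mem_filter, List.mem_range, Bool.or_eq_true, List.contains_iff_mem,
    List.any_eq_true, beq_iff_eq] at hw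
  obtain ⟨hlt, hw | ⟨a, ha, b, hb, hab⟩⟩ := hw
  · exact hL w hw
  · obtain ⟨x, hx, rfl⟩ := hL a ha
    obtain ⟨y, hy, rfl⟩ := hL b hb
    obtain ⟨t, rfl⟩ := idx_surj hlt
    refine ⟨t, hS.2 x hx y hy t _ _ (dist_wk hd x t) (dist_wk hd t y) ?_, rfl⟩
    intro k hk
    rw [hab]
    exact dist_le' hd hk

theorem grow_sound (hd : chkDist (4 * n) h v D = true) {S : Set (Fin n × Fin 4)}
    (hS : Cvx (Arc h v) S) {known : List (ℕ × ℕ)}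
    (hk : ∀ e ∈ known, (∃ x ∈ S, idx x = e.1) → (∃ x ∈ S, idx x = e.2) → S = Set.univ)
    (f : ℕ) {L : List ℕ} (hL : ∀ w ∈ L, ∃ x ∈ S, idx x = w)
    (hg : grow (4 * n) D known f L = true) : S = Set.univ := by
  induction f generalizing L with
  | zero => simp [grow] at hg
  | succ f ih =>
    simp only [grow, Bool.or_eq_true, List.any_eq_true, Bool.and_eq_true,
      List.contains_iff_mem, List.all_eq_true, List.mem_range] at hg
    rcases hg with (⟨e, he, h1, h2⟩ | hg) | hg
    · exact hk e he (hL _ h1) (hL _ h2)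
    · ext x
      simp only [Set.mem_univ, iff_true]
      obtain ⟨y, hy, hxy⟩ := hL _ (hg _ (idx_lt x))
      rwa [← idx_inj hxy]
    · exact ih (clos_sound hd hS hL) hg

theorem hulls_sound (hd : chkDist (4 * n) h v D = true) {S : Set (Fin n × Fin 4)}
    (hS : Cvx (Arc h v) S) {es known : List (ℕ × ℕ)}
    (hk : ∀ e ∈ known, (∃ x ∈ S, idx x = e.1) → (∃ x ∈ S, idx x = e.2) → S = Set.univ)
    (hh : hulls (4 * n) D known es = true) :
    ∀ e ∈ es, (∃ x ∈ S, idx x = e.1) → (∃ x ∈ S, idx x = e.2) → S = Set.univ := by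
  induction es generalizing known with
  | nil => simp
  | cons a es ih =>
    simp only [hulls, Bool.and_eq_true] at hh
    have ha : (∃ x ∈ S, idx x = a.1) → (∃ x ∈ S, idx x = a.2) → S = Set.univ := by
      intro h1 h2
      refine grow_sound hd hS hk 8 ?_ hh.1
      intro w hw
      simp only [List.mem_cons, List.not_mem_nil, or_false] at hw
      rcases hw with rfl | rfl
      · exact h1
      · exact h2
    intro e he
    rcases List.mem_cons.1 he with rfl | he
    · exact ha
    · refine ih ?_ hh.2 e he
      intro e' he'
      rcases List.mem_cons.1 he' with rfl | he'
      · exact ha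
      · exact hk e' he'

theorem arcs_sound (hd : chkDist (4 * n) h v D = true) {es : List (ℕ × ℕ)}
    {inside : ℕ → ℕ → Bool} (hh : hulls (4 * n) D [] es = true)
    (ha : chkArcs (4 * n) h v inside es = true) {S : Set (Fin n × Fin 4)}
    (hS : Cvx (Arc h v) S) {x y : Fin n × Fin 4} (hx : x ∈ S) (hy : y ∈ S)
    (hxy : Arc h v x y) (hin : ¬ inside (idx x) (idx y) = true) : S = Set.univ := by
  simp only [chkArcs, List.all_eq_true, List.mem_range, Bool.or_eq_true, Bool.not_eq_true',
    List.contains_iff_mem] at ha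
  rcases ha _ (idx_lt x) _ (idx_lt y) with (g | g) | g
  · rw [Arc, g] at hxy; exact absurd hxy (by simp)
  · exact absurd g hin
  · exact hulls_sound hd hS (by simp) hh _ g ⟨x, hx, rfl⟩ ⟨y, hy, rfl⟩

/-- All checks together. -/
def chkAll (N h v D c : ℕ) (es : List (ℕ × ℕ)) : Bool :=
  chkDist N h v D && chkCvx N D c &&
  chkArcs N h v (fun x y => c.testBit x && c.testBit y) es && hulls N D [] es &&
  (List.range N).any (fun w => c.testBit w) && (List.range N).any (fun w => !c.testBit w)

theorem good {c : ℕ} {es : List (ℕ × ℕ)} (hc : chkAll (4 * n) h v D c es = true) :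
    Good (Arc (n := n) h v) (CC c) := by
  simp only [chkAll, Bool.and_eq_true] at hc
  obtain ⟨⟨⟨⟨⟨hd, hcv⟩, ha⟩, hh⟩, h1⟩, h2⟩ := hc
  refine ⟨str hd, cvx hd hcv ?_, ?_, ?_⟩
  · simp only [List.any_eq_true, List.mem_range] at h1
    obtain ⟨w, hw, hw'⟩ := h1
    obtain ⟨x, rfl⟩ := idx_surj hw
    exact ⟨x, hw'⟩
  · simp only [List.any_eq_true, List.mem_range, Bool.not_eq_true'] at h2
    obtain ⟨w, hw, hw'⟩ := h2
    obtain ⟨x, rfl⟩ := idx_surj hw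
    intro hu
    have : x ∈ CC (n := n) c := by rw [hu]; trivial
    rw [CC, Set.mem_setOf_eq, hw'] at this
    exact absurd this (by simp)
  · intro S hS x hx y hy hxy hn
    refine arcs_sound hd hh ha hS hx hy hxy ?_
    rw [Bool.and_eq_true]
    exact hn

end

instance {n : ℕ} (h v : ℕ) (x y : Fin n × Fin 4) : Decidable (Arc h v x y) :=
  inferInstanceAs (Decidable (_ = true))

instance {n : ℕ} (c : ℕ) (x : Fin n × Fin 4) : Decidable (x ∈ CC (n := n) c) :=
  inferInstanceAs (Decidable (_ = true))

instance {n : ℕ} (c : ℕ) : DecidablePred (fun x => x ∈ CC (n := n) c) :=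
  fun x => inferInstanceAs (Decidable (x ∈ CC c))

instance {n : ℕ} (h v : ℕ) (p q r s : Fin n × Fin 4) : Decidable (CycF (Arc h v) p q r s) :=
  inferInstanceAs (Decidable (_ ∨ _))

instance {n : ℕ} (h v : ℕ) (l l2 : Fin n) : Decidable (CycRows (Arc h v) l l2) :=
  inferInstanceAs (Decidable (∀ j j' : Fin 4, j.val + 1 = j'.val → CycF _ _ _ _ _))

instance {n : ℕ} (h v c : ℕ) : Decidable (TopOK (Arc (n := n) h v) (CC c)) :=
  inferInstanceAs (Decidable (∀ l l2 : Fin n, l.val = 0 → l2.val = 1 → _ ∧ ∀ j, _ ∈ CC c))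

instance {n : ℕ} (h v c : ℕ) : Decidable (BotOK (Arc (n := n) h v) (CC c)) :=
  inferInstanceAs (Decidable (∀ l l2 : Fin n, l.val + 1 = n → l2.val + 2 = n → _ ∧
    (∀ j, ¬ (_ ∈ CC c ∧ _ ∈ CC c)) ∧
    (∀ j j' : Fin 4, j.val + 1 = j'.val → ¬ (_ ∈ CC c ∧ _ ∈ CC c))))

theorem ncard_CC {n c k : ℕ}
    (hk : (Finset.univ.filter fun x : Fin n × Fin 4 => x ∈ CC (n := n) c).card = k) :
    (CC (n := n) c).ncard = k := by
  rw [← hk, ← Set.ncard_coe_finset]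
  congr 1
  ext x
  simp

theorem realz {n h v D c k : ℕ} {es : List (ℕ × ℕ)} {t b : Prop}
    (hc : chkAll (4 * n) h v D c es = true)
    (hk : (Finset.univ.filter fun x : Fin n × Fin 4 => x ∈ CC (n := n) c).card = k)
    (ht : t → TopOK (Arc (n := n) h v) (CC c)) (hb : b → BotOK (Arc (n := n) h v) (CC c)) :
    Realz n k t b :=
  ⟨Arc h v, CC c, orient n h v, good hc, ncard_CC hk, ht, hb⟩

end Chk

namespace Chk

theorem base_4_1_FT : Realz 4 1 False True :=
  realz (h := 21074) (v := 1445) (c := 1) (D := 7185096158549388894740885740560564576571051854311438366909015787638320931078083062156260032885609001804416989799145384296035194517977951418517415098367894339649549696765342698090581158592834299185531546894068185626524728062808296182628681618732271153134143003463939408822009977438650382325469998609618019708427574624955801238959785732063057493306416364088858139383369841189169569417398689595250358084460667451788850844727052159297536942733590928651312) (es :=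
    [(6, 5), (1, 2), (5, 1), (1, 0), (0, 4), (2, 6), (3, 2), (7, 3), (4, 5), (8, 4), (5, 9),
    (6, 7), (10, 6), (7, 11), (9, 8), (8, 12), (9, 10), (13, 9), (11, 10), (10, 14), (15, 11),
    (12, 13), (14, 13), (14, 15)])
    (by decide +kernel) (by decide +kernel) False.elim (fun _ => by decide +kernel)

theorem base_4_4_FT : Realz 4 4 False True :=
  realz (h := 9479) (v := 2682) (c := 51) (D := 2784703308486994096857411543749840719635040885610095042016999755772698321135798692305938317594129987635122653612065102418649046168725400798474192944368027925486628435187880008205491165326981734553298414928484671984916442644783871623821012274406731156660381943524259810167915087160730546323436556559185198348939768734183487298466957891777104080995710306794263779144288900385253414994513470118634389483286905225070655054870258972773064067655212143424016) (es :=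
    [(5, 9), (4, 8), (6, 5), (1, 2), (10, 11), (7, 6), (2, 3), (6, 2), (3, 7), (6, 10), (11, 7),
    (14, 10), (10, 9), (9, 13), (8, 9), (12, 8), (11, 15), (13, 12), (13, 14), (15, 14)])
    (by decide +kernel) (by decide +kernel) False.elim (fun _ => by decide +kernel)

theorem base_4_6_FT : Realz 4 6 False True :=
  realz (h := 9568) (v := 2579) (c := 238) (D := 2784703307398132306714384390110591005039673074388984899720293521126792165974873435914099871203026553745521741702333522956130297951325933752473386876917219959379360627543821740529654550144938019004941539376472854977214975014140551056029281810603346880486645987646733166284566629537724959327530582671132944395279937811496537317019144619893367664688643243075380491045383573618108920992451595210646427813669807594247104586643699261978200013039201857664624) (es :=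
    [(11, 7), (10, 9), (10, 6), (9, 13), (8, 9), (1, 0), (0, 4), (5, 4), (4, 8), (9, 5),
    (12, 8), (14, 10), (10, 11), (11, 15), (13, 12), (13, 14), (15, 14)])
    (by decide +kernel) (by decide +kernel) False.elim (fun _ => by decide +kernel)

theorem base_4_8_FT : Realz 4 8 False True :=
  realz (h := 21059) (v := 1510) (c := 255) (D := 7185096228156697571640907687753559305346236380546938085154760062645869037278733420710519647561543118017843920600336292408727128947042657117177377124884840251852097907797612587191624234307880745668730814505924807176163668148222031239272727003597239435092227939575708398269482989362985383576760187991381927666932147882253003458672550222682104984248519518579508561388228180094921582787253044259765433497751391486054967204336624702068417362518950027678224) (es :=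
    [(6, 10), (7, 11), (9, 10), (13, 9), (9, 8), (8, 4), (5, 9), (8, 12), (10, 14), (11, 10),
    (15, 11), (12, 13), (14, 13), (14, 15)])
    (by decide +kernel) (by decide +kernel) False.elim (fun _ => by decide +kernel)

theorem base_5_7_FT : Realz 5 7 False True :=
  realz (h := 336723) (v := 22054) (c := 1772) (D := 18553713637445278964430700785028517479064198159206574360207112462115713319723869765975392378838461936511334650541737045534251884927285294142366353549152104538591354095925690642546642073072516306043672630522865546830564058120349847315276019027298429689728762833888564862741677352350748789084140483124694701649627120828989512309385520042054035874502092043715603430032841911893644032410774045152647354672892887182103550814549624440738294010969619975658689959753204765480634517205777067227533189828978811036909594565377279451081491757465501155863360010421033020623729791029776) (es :=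
    [(1, 2), (11, 7), (4, 5), (0, 1), (4, 0), (1, 5), (8, 4), (11, 10), (10, 14), (15, 11),
    (13, 12), (8, 9), (12, 8), (9, 13), (12, 16), (17, 13), (13, 14), (14, 18), (15, 14),
    (19, 15), (16, 17), (18, 17), (18, 19)])
    (by decide +kernel) (by decide +kernel) False.elim (fun _ => by decide +kernel)

theorem base_5_9_FT : Realz 5 9 False True :=
  realz (h := 151649) (v := 42050) (c := 1911) (D := 7190799778673057338479252797168691938278180310813948061217524724843226424449995191116307734649111606586876387644653494375730062601831539018753200849079203980152074556581102456507128286863303606094443861785324469916171016485670324215530686577601098351257948456555590516255639528540777193573212560375392127584928863260007868872671782810359098136120652967392829954923620906029733374826244061314914912540166197265236965589692787004521717059122744422162319091517224805543350240781047876678406236677004804221839975059707873850598947564484227340059411404298330285094758135321616) (es :=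
    [(13, 9), (11, 7), (12, 8), (15, 19), (14, 15), (11, 10), (10, 14), (15, 11), (18, 14),
    (14, 13), (13, 17), (12, 13), (16, 12), (17, 16), (17, 18), (19, 18), (3, 2), (7, 3),
    (6, 7)])
    (by decide +kernel) (by decide +kernel) False.elim (fun _ => by decide +kernel)

theorem base_4_9_FF : Realz 4 9 False False :=
  realz (h := 29458) (v := 277) (c := 1911) (D := 25561624514282839115967219373850895873264741518729932196275319173607126595265597462966636873286248646788773397589578129422106958914691266001775783769008095092792775408148697656088779974636695678205745498443245302778547649039699024834648305977413466701455275445353242184940850725319528008702264439747190605123401732004136112194080516797864594700385751249857225377618536977122739565940958527814771466003172031574077302949561575471532932426435869240562736) (es :=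
    [(3, 2), (7, 3), (14, 10), (11, 10), (15, 11), (7, 6), (11, 7), (13, 14), (14, 15), (8, 12),
    (13, 9), (12, 13)])
    (by decide +kernel) (by decide +kernel) False.elim False.elim

theorem base_4_10_TF : Realz 4 10 True False :=
  realz (h := 29266) (v := 821) (c := 1791) (D := 16227782467562487402392221693967156713327726758042079076592807447211111587943970821528172787654287358847177926831091147902637646436381675608699117159318651648317397937750684388223020438949131260968086386409913511368702842462441142183785653569837826658348556796077096720265672606677826807109165485218133600963337552349215943225895813285454547312722436583924448793774488250286938901781433870004338355785227047307222697311186201166500913004659947358745648) (es :=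
    [(9, 13), (11, 7), (9, 8), (8, 12), (4, 8), (11, 10), (14, 10), (15, 11), (12, 13),
    (13, 14), (14, 15)])
    (by decide +kernel) (by decide +kernel) (fun _ => by decide +kernel) False.elim

theorem base_4_11_TF : Realz 4 11 True False :=
  realz (h := 29522) (v := 277) (c := 2047) (D := 25561624514282839115967219373850895873264741518729932196275319173607126595265597462966636873286248646788773397589578129422106958914691266001775783769008068932515502212762238351349080851427578670455735563274822128033320472731115910005595991562778326013825734500877095702352179435501831953134831579833853005481752265949930029451912063766807921012411768325021601602059739223255509037944728117726658407635173766923815424823814736571811559889582907803661360) (es :=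
    [(11, 7), (14, 10), (11, 10), (15, 11), (13, 14), (14, 15), (8, 12), (13, 9), (12, 13)])
    (by decide +kernel) (by decide +kernel) (fun _ => by decide +kernel) False.elim

theorem base_4_12_TF : Realz 4 12 True False :=
  realz (h := 26194) (v := 1637) (c := 4095) (D := 16519067808017253496199283622427097782513314447837180567633243975617285094422396027312268289040528410577000775002737040570367555314051594761990986238005442986814094901395655640187991336461419450400628418967730254877831737913711422670415960187041568832866536123780250498016782459037493784686208351726170435782598713867225449221441673168846116090918702228731749550449367445300447901705402894540824231821799979583902593596713684924107307551797458256360496) (es :=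
    [(13, 14), (10, 14), (15, 11), (14, 15), (12, 8), (9, 13), (13, 12)])
    (by decide +kernel) (by decide +kernel) (fun _ => by decide +kernel) False.elim

theorem base_5_13_TF : Realz 5 13 True False :=
  realz (h := 463698) (v := 4405) (c := 14335) (D := 78079727371723130243570504504936227760751551516443180554450877859148020247505442559284251128012516851043948337403059138687944179167727514260581672688130666823598538884614197383161341828715697810661457527716148369223841253093687462726616924787572655103298307057928759494359961252331761168547026561820398800278140399491827895237401651432805349662773994760628674899424807355060543003261287369457432241298868532232653695961552593332673433891279918360614386905438131116490709036195713218868267923311381169144832623245826552867594055727043422496133503026273518217359059968947248) (es :=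
    [(11, 7), (14, 10), (12, 16), (11, 10), (15, 11), (14, 13), (17, 13), (15, 14), (18, 14),
    (19, 15), (16, 17), (17, 18), (18, 19)])
    (by decide +kernel) (by decide +kernel) (fun _ => by decide +kernel) False.elim

theorem base_5_10_TT : Realz 5 10 True True :=
  realz (h := 337490) (v := 24037) (c := 1023) (D := 18553713769247602746455304300687589770439869836432791691842194254829705383829361609157023939871224387944975611000239326896553531632209866837090618632241132320888614412911618107986963229395129098577530485694485205283915213019201391440472755767777261487374610829041034201670035260286980688222153639384170158355843939930109780801950240971311202811487991528182727315595778515089943877958585461662858845432923712195539016775437278347613554413305613983670215960373848567830038512202310137120042260865528112536875656314265664400190619946906966770753410075331387100388862707463216) (es :=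
    [(7, 11), (6, 10), (8, 12), (13, 9), (9, 10), (10, 11), (10, 14), (11, 15), (14, 18),
    (13, 14), (17, 13), (13, 12), (12, 16), (15, 14), (19, 15), (16, 17), (18, 17), (18, 19)])
    (by decide +kernel) (by decide +kernel) (fun _ => by decide +kernel) (fun _ => by decide +kernel)

theorem base_5_11_TT : Realz 5 11 True True :=
  realz (h := 152146) (v := 42789) (c := 2047) (D := 7190799779023151101136814472570292753601340382441106197780208642035197910823750186787846344456826073666972449642193574327697442071024124426398377358547837483341155219265411933068603182239004866437425732939549823389124659802126220324975974006785940113663355733678441467878173951839135639679521611032756930219024059503170210288400827907805222354856296134269478840851430547818494021671469525282837901243863690799787560606664671822653757179317209971747936910424918793981754747097086319283663632710241099032941323975589954257534366760667828884182098379063955258300439113856048) (es :=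
    [(9, 13), (8, 12), (14, 13), (13, 17), (12, 13), (16, 12), (18, 14), (14, 15), (11, 7),
    (11, 10), (10, 14), (15, 11), (15, 19), (17, 16), (17, 18), (19, 18)])
    (by decide +kernel) (by decide +kernel) (fun _ => by decide +kernel) (fun _ => by decide +kernel)

theorem base_5_12_TT : Realz 5 12 True True :=
  realz (h := 335954) (v := 21925) (c := 4095) (D := 18553713637270876899902220586569384520410939936778424325605961205850169306317916836056142697398390822286248197184530371662394113364606307566081649489731819753358471116880504904625075287033726650038576401974529642956691547541077507476743962145801928907352332094639115266914723768375769753415270083410299639642644101421629007573465775570598627702250235633714969562945360909482207889653328300542664385455120911192305750805395653025484188933682502191835584100349403570070840788380848926904112169267500503249028901316838626594865698365881455548720542378543217075205742285386800) (es :=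
    [(8, 12), (13, 9), (13, 14), (17, 13), (13, 12), (12, 16), (14, 18), (10, 14), (15, 11),
    (15, 14), (19, 15), (16, 17), (18, 17), (18, 19)])
    (by decide +kernel) (by decide +kernel) (fun _ => by decide +kernel) (fun _ => by decide +kernel)

theorem base_6_13_TT : Realz 6 13 True True :=
  realz (h := 2426450) (v := 670517) (c := 52991) (D := 18568441845019018675578045853392064388550929503426966506044961937542487841685456670515531602429719637096246029574367406529720121315939647115246472748038169441965273952519511897887983444393633623447802251609420058422712265356606363293762315461932260784160537781650945403629752211542482247235031645889254710838692126825711143326498006687904431320411563162563491072587124712744948426317526586700769632202286427290200381635109155472424703765788137437164032175905657626031152848380493955700597232709142508528600167191316095315228955037178608803239957407179573724331687606448314222132908682121979810532739651324011007739320747239588088940795735237281146177163187068368655571463905352583461598229552) (es :=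
    [(9, 13), (9, 8), (8, 12), (4, 8), (19, 15), (22, 18), (13, 12), (12, 16), (14, 13),
    (13, 17), (18, 14), (18, 17), (17, 21), (16, 17), (20, 16), (18, 19), (19, 23), (21, 20),
    (21, 22), (23, 22)])
    (by decide +kernel) (by decide +kernel) (fun _ => by decide +kernel) (fun _ => by decide +kernel)

def D7 : ℕ := 2493555948475159044857086262506422274417391305287251051800737031387197102602032978302546319237268075273942536439690890603943037811192547215807512638585253486854645861612871729371568167765232728668747241324275793197584845703879100475405301447167031872762690383256321610619113647544801319423767419562720496329254624394500665198703023434924170547525374402866542795006710607793245315877281441134723488468457893178695462198477591112825324210294830816908336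

def es7 : List (ℕ × ℕ) :=
    [(1, 2), (6, 7), (2, 3), (6, 2), (3, 7), (7, 11), (13, 9), (8, 4), (8, 9), (12, 8),
    (13, 12), (14, 13)]

def inA (x y : ℕ) : Bool := (1651).testBit x && (1651).testBit y
def inB (x y : ℕ) : Bool := (52224).testBit x && (52224).testBit y

def chkPairs : Bool :=
  (List.range 16).all fun a => (List.range 16).all fun b =>
    !arcB 1878 2217 a b || !inA a b ||
    (List.range 16).all fun c => (List.range 16).all fun d =>
      !arcB 1878 2217 c d || !inB c d || grow 16 D7 es7 8 [a, b, c, d]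

theorem seven_dist : chkDist (4 * 4) 1878 2217 D7 = true := by decide +kernel
theorem seven_cvx : chkCvx (4 * 4) D7 1651 = true := by decide +kernel
theorem seven_hulls : hulls (4 * 4) D7 [] es7 = true := by decide +kernel
theorem seven_arcs : chkArcs (4 * 4) 1878 2217 (fun x y => inA x y || inB x y) es7 = true := by
  decide +kernel
theorem seven_pairs : chkPairs = true := by decide +kernel

theorem seven : 7 ∈ strongConvexitySpectrum (gridGraph 4 4) := by
  have hcard : (CC (n := 4) 1651).ncard = 7 := ncard_CC (by decide +kernel)
  have hcardB : (CC (n := 4) 52224).ncard = 4 := ncard_CC (by decide +kernel)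
  have hs : Str (Arc (n := 4) 1878 2217) := str seven_dist
  have hC : Cvx (Arc (n := 4) 1878 2217) (CC 1651) :=
    cvx seven_dist seven_cvx ⟨(0, 0), by decide +kernel⟩
  refine ⟨Arc 1878 2217, orient 4 _ _, str_iff.2 hs, ?_⟩
  rw [← hcard]
  refine conv_eq_of hC ?_ ?_
  · intro hu
    have : ((3, 3) : Fin 4 × Fin 4) ∈ CC (n := 4) 1651 := by rw [hu]; trivial
    exact absurd this (by decide +kernel)
  intro S hS hne
  by_cases hsm : ∀ x ∈ S, ∀ y ∈ S, x = y
  · exact ncard_le_of_small hC hsm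
  push Not at hsm
  obtain ⟨a, ha, b, hb, hab⟩ := hsm
  have hout : ∀ x ∈ S, ∃ y ∈ S, Arc 1878 2217 x y := by
    intro x hx
    by_cases hax : a = x
    · exact cvx_out hs hS hx hb (by rw [← hax]; exact hab)
    · exact cvx_out hs hS hx ha (fun h => hax h.symm)
  have hin : ∀ x ∈ S, ∀ y ∈ S, Arc 1878 2217 x y →
      inA (idx x) (idx y) = true ∨ inB (idx x) (idx y) = true := by
    intro x hx y hy hxy
    by_contra hn
    exact hne (arcs_sound seven_dist seven_hulls seven_arcs hS hx hy hxy
      (by simpa using hn))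
  by_cases hA : ∃ x ∈ S, ∃ y ∈ S, Arc 1878 2217 x y ∧ inA (idx x) (idx y) = true
  · refine Set.ncard_le_ncard (fun x hx => ?_) (Set.toFinite _)
    obtain ⟨y, hy, hxy⟩ := hout x hx
    rcases hin x hx y hy hxy with h | h
    · simp only [inA, Bool.and_eq_true] at h
      exact h.1
    · exfalso
      obtain ⟨p, hp, q, hq, hpq, hpqA⟩ := hA
      have hc := seven_pairs
      simp only [chkPairs, List.all_eq_true, List.mem_range, Bool.or_eq_true,
        Bool.not_eq_true'] at hc
      rcases hc _ (idx_lt p) _ (idx_lt q) with (g | g) | g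
      · rw [Arc, g] at hpq; exact absurd hpq (by simp)
      · rw [hpqA] at g; exact absurd g (by simp)
      rcases g _ (idx_lt x) _ (idx_lt y) with (g | g) | g
      · rw [Arc, g] at hxy; exact absurd hxy (by simp)
      · rw [h] at g; exact absurd g (by simp)
      refine hne (grow_sound seven_dist hS
        (hulls_sound seven_dist hS (by simp) seven_hulls) 8 ?_ g)
      intro w hw
      simp only [List.mem_cons, List.not_mem_nil, or_false] at hw
      rcases hw with rfl | rfl | rfl | rfl
      · exact ⟨p, hp, rfl⟩
      · exact ⟨q, hq, rfl⟩
      · exact ⟨x, hx, rfl⟩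
      · exact ⟨y, hy, rfl⟩
  · have : S.ncard ≤ (CC (n := 4) 52224).ncard := by
      refine Set.ncard_le_ncard (fun x hx => ?_) (Set.toFinite _)
      obtain ⟨y, hy, hxy⟩ := hout x hx
      rcases hin x hx y hy hxy with h | h
      · exact absurd ⟨x, hx, y, hy, hxy, h⟩ hA
      · simp only [inB, Bool.and_eq_true] at h
        exact h.1
    omega

end Chk

theorem construct (n k : ℕ) (hn : 4 ≤ n) (h1 : 1 ≤ k) (h2 : k ≤ 4 * n - 4)
    (h3 : k ≠ 2) (h4 : k ≠ 3) (h5 : k ≠ 5) : k ∈ strongConvexitySpectrum (gridGraph n 4) := by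
  obtain ⟨m, rfl⟩ : ∃ m, n = 4 + m := ⟨n - 4, by omega⟩
  by_cases hk : k < 10
  · have : k = 1 ∨ k = 4 ∨ k = 6 ∨ k = 7 ∨ k = 8 ∨ k = 9 := by omega
    rcases this with rfl | rfl | rfl | rfl | rfl | rfl
    · exact (Chk.base_4_1_FT.keeps (by norm_num) m).mem
    · exact (Chk.base_4_4_FT.keeps (by norm_num) m).mem
    · exact (Chk.base_4_6_FT.keeps (by norm_num) m).mem
    · cases m with
      | zero => exact Chk.seven
      | succ m =>
        have := (Chk.base_5_7_FT.keeps (by norm_num) m).mem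
        rwa [show 5 + m = 4 + (m + 1) by omega] at this
    · exact (Chk.base_4_8_FT.keeps (by norm_num) m).mem
    · cases m with
      | zero => exact Chk.base_4_9_FF.mem
      | succ m =>
        have := (Chk.base_5_9_FT.keeps (by norm_num) m).mem
        rwa [show 5 + m = 4 + (m + 1) by omega] at this
  · have main : ∀ n0 k0 a : ℕ, 4 ≤ n0 → k = k0 + 4 * a → n0 + a ≤ 4 + m →
        Realz n0 k0 True False → Realz (n0 + 1) k0 True True →
        k ∈ strongConvexitySpectrum (gridGraph (4 + m) 4) := by
      intro n0 k0 a hn0 hka hle r1 r2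
      by_cases he : n0 + a = 4 + m
      · rw [hka, ← he]
        exact (r1.extends (by omega) a).mem
      · obtain ⟨b, hb⟩ : ∃ b, 4 + m = n0 + 1 + a + b := ⟨4 + m - (n0 + 1 + a), by omega⟩
        rw [hka, hb]
        exact ((r2.extends (by omega) a).keeps (by omega) b).mem
    obtain ⟨a, ha⟩ : ∃ a, k = 10 + 4 * a ∨ k = 11 + 4 * a ∨ k = 12 + 4 * a ∨ k = 13 + 4 * a :=
      ⟨(k - 10) / 4, by omega⟩
    rcases ha with ha | ha | ha | ha
    · exact main 4 10 a (by omega) ha (by omega) Chk.base_4_10_TF Chk.base_5_10_TT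
    · exact main 4 11 a (by omega) ha (by omega) Chk.base_4_11_TF Chk.base_5_11_TT
    · exact main 4 12 a (by omega) ha (by omega) Chk.base_4_12_TF Chk.base_5_12_TT
    · exact main 5 13 a (by omega) ha (by omega) Chk.base_5_13_TF Chk.base_6_13_TT

/-! ### The upper inclusion: small cases -/

namespace Upp

theorem five {V : Type*} (c : V → Bool) (R : V → V → Prop) (hsym : ∀ x y, R x y → R y x)
    (hc : ∀ x y, R x y → c x ≠ c y)
    (hK : ∀ x y p q r, x ≠ y → p ≠ q → q ≠ r → p ≠ r → R x p → R x q → R x r → R y p → R y q →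
      R y r → False)
    (S : Finset V) (hS : S.Nonempty)
    (hd : ∀ x ∈ S, ∃ y ∈ S, ∃ z ∈ S, y ≠ z ∧ R x y ∧ R x z) :
    S.card ≠ 2 ∧ S.card ≠ 3 ∧ S.card ≠ 5 := by
  classical
  obtain ⟨v, hv⟩ := hS
  obtain ⟨p, hp, q, hq, hpq, hvp, hvq⟩ := hd v hv
  obtain ⟨v2, hv2, hvv, hpv⟩ : ∃ v2 ∈ S, v ≠ v2 ∧ R p v2 := by
    obtain ⟨y, hy, z, hz, hyz, h1, h2⟩ := hd p hp
    by_cases h : v = y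
    · exact ⟨z, hz, h ▸ hyz, h2⟩
    · exact ⟨y, hy, h, h1⟩
  have c1 := hc _ _ hvp
  have c2 := hc _ _ hvq
  have c3 := hc _ _ hpv
  have hsub : ({v, v2, p, q} : Finset V) ⊆ S := by
    intro x hx
    simp only [Finset.mem_insert, Finset.mem_singleton] at hx
    rcases hx with rfl | rfl | rfl | rfl <;> assumption
  have n1 : v ≠ p := fun h => c1 (h ▸ rfl)
  have n2 : v ≠ q := fun h => c2 (h ▸ rfl)
  have n3 : v2 ≠ p := fun h => c3 (h ▸ rfl)
  have n4 : v2 ≠ q := by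
    intro h
    rw [h] at c3
    revert c1 c2 c3
    cases c v <;> cases c p <;> cases c q <;> simp
  have hcard : ({v, v2, p, q} : Finset V).card = 4 := by
    simp [hvv, n1, n2, n3, n4, hpq]
  have h4 := Finset.card_le_card hsub
  rw [hcard] at h4
  refine ⟨by omega, by omega, fun h5 => ?_⟩
  have hdiff : (S \ {v, v2, p, q}).card = 1 := by
    rw [Finset.card_sdiff_of_subset hsub]; omega
  obtain ⟨z, hz⟩ := Finset.card_eq_one.1 hdiff
  have hz' : z ∈ S \ {v, v2, p, q} := by rw [hz]; simp
  simp only [Finset.mem_sdiff, Finset.mem_insert, Finset.mem_singleton, not_or] at hz'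
  obtain ⟨hzS, z1, z2, z3, z4⟩ := hz'
  have hall : ∀ x ∈ S, x = v ∨ x = v2 ∨ x = p ∨ x = q ∨ x = z := by
    intro x hx
    by_cases hh : x ∈ S \ {v, v2, p, q}
    · rw [hz] at hh
      simp at hh
      tauto
    · simp only [Finset.mem_sdiff, Finset.mem_insert, Finset.mem_singleton] at hh
      tauto
  -- neighbours of the remaining vertices are forced by the colours
  have key : ∀ s t u1 u2 : V, c u1 = c u2 → c u1 ≠ c z → s ∈ S → c s = c z →
      (∀ x ∈ S, c x ≠ c z → x = u1 ∨ x = u2) → R s u1 ∧ R s u2 := by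
    intro s _ u1 u2 _ _ hs hsz hx
    obtain ⟨y, hy, y', hy', hyy, r1, r2⟩ := hd s hs
    have e1 := hx y hy (fun h => hc _ _ r1 (by rw [hsz, h]))
    have e2 := hx y' hy' (fun h => hc _ _ r2 (by rw [hsz, h]))
    rcases e1 with rfl | rfl <;> rcases e2 with rfl | rfl
    · exact absurd rfl hyy
    · exact ⟨r1, r2⟩
    · exact ⟨r2, r1⟩
    · exact absurd rfl hyy
  by_cases hcz : c z = c v
  · have hx : ∀ x ∈ S, c x ≠ c z → x = p ∨ x = q := by
      intro x hx hxz
      rcases hall x hx with rfl | rfl | rfl | rfl | rfl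
      · exact absurd hcz.symm hxz
      · exfalso
        revert c1 c3 hcz hxz
        cases c v <;> cases c p <;> cases c x <;> cases c z <;> simp
      · exact Or.inl rfl
      · exact Or.inr rfl
      · exact absurd rfl hxz
    have e0 : c p = c q := by
      revert c1 c2; cases c v <;> cases c p <;> cases c q <;> simp
    have e1 : c p ≠ c z := by rw [hcz]; exact c1.symm
    have e2 : c v2 = c z := by
      revert c1 c3 hcz; cases c v <;> cases c p <;> cases c z <;> cases c v2 <;> simp
    obtain ⟨a1, a2⟩ := key z z p q e0 e1 hzS rfl hx
    obtain ⟨b1, b2⟩ := key v2 z p q e0 e1 hv2 e2 hx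
    exact hK p q v v2 z hpq hvv (Ne.symm z2) (Ne.symm z1) (hsym _ _ hvp) (hsym _ _ b1)
      (hsym _ _ a1) (hsym _ _ hvq) (hsym _ _ b2) (hsym _ _ a2)
  · have hx : ∀ x ∈ S, c x ≠ c z → x = v ∨ x = v2 := by
      intro x hx hxz
      rcases hall x hx with rfl | rfl | rfl | rfl | rfl
      · exact Or.inl rfl
      · exact Or.inr rfl
      · exfalso
        revert c1 c3 hcz hxz
        cases c v <;> cases c x <;> cases c z <;> simp
      · exfalso
        revert c2 hcz hxz
        cases c v <;> cases c x <;> cases c z <;> simp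
      · exact absurd rfl hxz
    have e0 : c v = c v2 := by
      revert c1 c3; cases c v <;> cases c p <;> cases c v2 <;> simp
    have e1 : c v ≠ c z := fun h => hcz h.symm
    have e2 : c q = c z := by
      revert c2 e1; cases c v <;> cases c q <;> cases c z <;> simp
    obtain ⟨a1, a2⟩ := key z z v v2 e0 e1 hzS rfl hx
    obtain ⟨b1, b2⟩ := key q z v v2 e0 e1 hq e2 hx
    exact hK v v2 p q z hvv hpq (Ne.symm z4) (Ne.symm z3) hvp (hsym _ _ b1)
      (hsym _ _ a1) (hsym _ _ hpv) (hsym _ _ b2) (hsym _ _ a2)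

theorem grid_col {n m : ℕ} (x y : Fin n × Fin m) (h : (gridGraph n m).Adj x y) :
    (decide ((x.1.val + x.2.val) % 2 = 0)) ≠ decide ((y.1.val + y.2.val) % 2 = 0) := by
  rw [grid_adj] at h
  intro e
  rw [decide_eq_decide] at e
  rcases h with ⟨h, h'⟩ | ⟨h, h'⟩ <;> rw [Fin.ext_iff] at h' <;> omega

theorem grid_K {n m : ℕ} (x y p q r : Fin n × Fin m) (h1 : x ≠ y) (h2 : p ≠ q) (h3 : q ≠ r)
    (h4 : p ≠ r) (xp : (gridGraph n m).Adj x p) (xq : (gridGraph n m).Adj x q)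
    (xr : (gridGraph n m).Adj x r) (yp : (gridGraph n m).Adj y p) (yq : (gridGraph n m).Adj y q)
    (yr : (gridGraph n m).Adj y r) : False := by
  rw [grid_adj] at *
  simp only [ne_eq, Prod.ext_iff, Fin.ext_iff] at *
  rcases xp with ⟨xp | xp, xp'⟩ | ⟨xp | xp, xp'⟩ <;> rcases xq with ⟨xq | xq, xq'⟩ | ⟨xq | xq, xq'⟩ <;>
    omega

theorem not_235 {n m : ℕ} {A : Fin n × Fin m → Fin n × Fin m → Prop}
    (hA : IsOrientation (gridGraph n m) A) (hs : Str A) {C : Set (Fin n × Fin m)} (hC : Cvx A C) :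
    C.ncard ≠ 2 ∧ C.ncard ≠ 3 ∧ C.ncard ≠ 5 := by
  classical
  by_cases h1 : C.ncard ≤ 1
  · omega
  have hnt : 1 < C.ncard := by omega
  have h := five (fun x : Fin n × Fin m => decide ((x.1.val + x.2.val) % 2 = 0))
    (gridGraph n m).Adj (fun x y h => h.symm) grid_col grid_K C.toFinite.toFinset
    (by simpa using hC.1) (by
      intro x hx
      simp only [Set.Finite.mem_toFinset] at hx ⊢
      obtain ⟨z, hz, hzx⟩ := Set.exists_ne_of_one_lt_ncard hnt x
      obtain ⟨p, hp, hxp⟩ := cvx_out hs hC hx hz hzx.symm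
      obtain ⟨q, hq, hxq⟩ := cvx_in hs hC hx hz hzx.symm
      refine ⟨p, hp, q, hq, ?_, hA.1 _ _ hxp, (hA.1 _ _ hxq).symm⟩
      rintro rfl
      exact hA.2.2 _ _ hxp hxq)
  rwa [← Set.ncard_eq_toFinset_card] at h

/-! ### The upper bound -/

/-- Adjacency in the integer grid. -/
def Ad (a1 a2 b1 b2 : ℤ) : Prop :=
  ((a1 + 1 = b1 ∨ b1 + 1 = a1) ∧ a2 = b2) ∨ ((a2 + 1 = b2 ∨ b2 + 1 = a2) ∧ a1 = b1)

/-- The integer grid distance is at least `k`. -/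
def Far (k a1 a2 b1 b2 : ℤ) : Prop :=
  k ≤ a1 - b1 + (a2 - b2) ∨ k ≤ a1 - b1 + (b2 - a2) ∨ k ≤ b1 - a1 + (a2 - b2) ∨
    k ≤ b1 - a1 + (b2 - a2)

def Bx (n m a1 a2 : ℤ) : Prop := 0 ≤ a1 ∧ a1 < n ∧ 0 ≤ a2 ∧ a2 < m

def Wit1 (n m a1 a2 b1 b2 c1 c2 y1 y2 w1 w2 : ℤ) : Prop :=
  Bx n m y1 y2 ∧ Bx n m w1 w2 ∧ Ad y1 y2 a1 a2 ∧ ¬ (y1 = b1 ∧ y2 = b2) ∧ ¬ (y1 = c1 ∧ y2 = c2) ∧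
    ¬ (w1 = a1 ∧ w2 = a2) ∧ ¬ (w1 = b1 ∧ w2 = b2) ∧ ¬ (w1 = c1 ∧ w2 = c2) ∧
    (Ad b1 b2 w1 w2 ∨ Ad c1 c2 w1 w2) ∧ Far 3 y1 y2 w1 w2

def Wit2 (n m a1 a2 b1 b2 c1 c2 y1 y2 w1 w2 : ℤ) : Prop :=
  Bx n m y1 y2 ∧ Bx n m w1 w2 ∧ Ad y1 y2 a1 a2 ∧ ¬ (y1 = b1 ∧ y2 = b2) ∧ ¬ (y1 = c1 ∧ y2 = c2) ∧
    ¬ (w1 = a1 ∧ w2 = a2) ∧ ¬ (w1 = b1 ∧ w2 = b2) ∧ ¬ (w1 = c1 ∧ w2 = c2) ∧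
    ((Ad b1 b2 w1 w2 ∧ Far 3 y1 y2 w1 w2) ∨ (Ad c1 c2 w1 w2 ∧ Far 4 y1 y2 w1 w2))


end Upp

namespace Upp

theorem geo1_aux (n m a1 a2 c1 c2 y1 y2 : ℤ) (hn : 4 ≤ n) (hm : 4 ≤ m)
    (ha : Bx n m a1 a2) (hb : Bx n m (a1 + 1) a2) (hc : Bx n m c1 c2) (hy : Bx n m y1 y2)
    (hac : Ad a1 a2 c1 c2) (hya : Ad y1 y2 a1 a2)
    (hyb : ¬ (y1 = a1 + 1 ∧ y2 = a2)) (hyc : ¬ (y1 = c1 ∧ y2 = c2)) :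
    ∃ y1 y2 w1 w2, Wit1 n m a1 a2 (a1 + 1) a2 c1 c2 y1 y2 w1 w2 := by
  by_contra H
  push Not at H
  simp only [Wit1, Bx, Ad, Far] at *
  rcases hac with ⟨h | h, h'⟩ | ⟨h | h, h'⟩ <;> rcases hya with ⟨k | k, k'⟩ | ⟨k | k, k'⟩ <;>
  first
  | omega
  | (
     try have g1 : ¬ ((y1 ≥ 0) ∧ (0 ≤ (a1 + 2) ∧ (a1 + 2) < n ∧ 0 ≤ a2 ∧ a2 < m)) :=
       fun e => H y1 y2 (a1 + 2) a2 (by omega)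
     try have g2 : ¬ ((y1 ≥ 0) ∧ (0 ≤ (a1 + 1) ∧ (a1 + 1) < n ∧ 0 ≤ (a2 + 1) ∧ (a2 + 1) < m)) :=
       fun e => H y1 y2 (a1 + 1) (a2 + 1) (by omega)
     try have g3 : ¬ ((y1 ≥ 0) ∧ (0 ≤ (a1 + 1) ∧ (a1 + 1) < n ∧ 0 ≤ (a2 - 1) ∧ (a2 - 1) < m)) :=
       fun e => H y1 y2 (a1 + 1) (a2 - 1) (by omega)
     try have g4 : ¬ ((y1 ≥ 0) ∧ (0 ≤ (c1 + 1) ∧ (c1 + 1) < n ∧ 0 ≤ c2 ∧ c2 < m)) :=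
       fun e => H y1 y2 (c1 + 1) c2 (by omega)
     try have g5 : ¬ ((y1 ≥ 0) ∧ (0 ≤ (c1 - 1) ∧ (c1 - 1) < n ∧ 0 ≤ c2 ∧ c2 < m)) :=
       fun e => H y1 y2 (c1 - 1) c2 (by omega)
     try have g6 : ¬ ((y1 ≥ 0) ∧ (0 ≤ c1 ∧ c1 < n ∧ 0 ≤ (c2 + 1) ∧ (c2 + 1) < m)) :=
       fun e => H y1 y2 c1 (c2 + 1) (by omega)
     try have g7 : ¬ ((y1 ≥ 0) ∧ (0 ≤ c1 ∧ c1 < n ∧ 0 ≤ (c2 - 1) ∧ (c2 - 1) < m)) :=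
       fun e => H y1 y2 c1 (c2 - 1) (by omega)
     try have g8 : ¬ (((a1 - 1) ≥ 0) ∧ (0 ≤ (a1 + 2) ∧ (a1 + 2) < n ∧ 0 ≤ a2 ∧ a2 < m)) :=
       fun e => H (a1 - 1) a2 (a1 + 2) a2 (by omega)
     try have g9 : ¬ (((a1 - 1) ≥ 0) ∧ (0 ≤ (a1 + 1) ∧ (a1 + 1) < n ∧ 0 ≤ (a2 + 1) ∧ (a2 + 1) < m)) :=
       fun e => H (a1 - 1) a2 (a1 + 1) (a2 + 1) (by omega)
     try have g10 : ¬ (((a1 - 1) ≥ 0) ∧ (0 ≤ (a1 + 1) ∧ (a1 + 1) < n ∧ 0 ≤ (a2 - 1) ∧ (a2 - 1) < m)) :=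
       fun e => H (a1 - 1) a2 (a1 + 1) (a2 - 1) (by omega)
     try have g11 : ¬ (((a1 - 1) ≥ 0) ∧ (0 ≤ (c1 + 1) ∧ (c1 + 1) < n ∧ 0 ≤ c2 ∧ c2 < m)) :=
       fun e => H (a1 - 1) a2 (c1 + 1) c2 (by omega)
     try have g12 : ¬ (((a1 - 1) ≥ 0) ∧ (0 ≤ (c1 - 1) ∧ (c1 - 1) < n ∧ 0 ≤ c2 ∧ c2 < m)) :=
       fun e => H (a1 - 1) a2 (c1 - 1) c2 (by omega)
     try have g13 : ¬ (((a1 - 1) ≥ 0) ∧ (0 ≤ c1 ∧ c1 < n ∧ 0 ≤ (c2 + 1) ∧ (c2 + 1) < m)) :=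
       fun e => H (a1 - 1) a2 c1 (c2 + 1) (by omega)
     try have g14 : ¬ (((a1 - 1) ≥ 0) ∧ (0 ≤ c1 ∧ c1 < n ∧ 0 ≤ (c2 - 1) ∧ (c2 - 1) < m)) :=
       fun e => H (a1 - 1) a2 c1 (c2 - 1) (by omega)
     clear H
     omega)

theorem geo2_aux (n m a1 a2 c1 c2 y1 y2 : ℤ) (hn : 4 ≤ n) (hm : 4 ≤ m)
    (ha : Bx n m a1 a2) (hb : Bx n m (a1 + 1) a2) (hc : Bx n m c1 c2) (hy : Bx n m y1 y2)
    (hac : Ad (a1 + 1) a2 c1 c2) (hya : Ad y1 y2 a1 a2) (hne : ¬ (c1 = a1 ∧ c2 = a2))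
    (hyb : ¬ (y1 = a1 + 1 ∧ y2 = a2)) (hyc : ¬ (y1 = c1 ∧ y2 = c2)) :
    ∃ y1 y2 w1 w2, Wit2 n m a1 a2 (a1 + 1) a2 c1 c2 y1 y2 w1 w2 := by
  by_contra H
  push Not at H
  simp only [Wit2, Bx, Ad, Far] at *
  rcases hac with ⟨h | h, h'⟩ | ⟨h | h, h'⟩ <;> rcases hya with ⟨k | k, k'⟩ | ⟨k | k, k'⟩ <;>
  first
  | omega
  | (
     try have g1 : ¬ ((y1 ≥ 0) ∧ (0 ≤ (a1 + 2) ∧ (a1 + 2) < n ∧ 0 ≤ a2 ∧ a2 < m)) :=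
       fun e => H y1 y2 (a1 + 2) a2 (by omega)
     try have g2 : ¬ ((y1 ≥ 0) ∧ (0 ≤ (a1 + 1) ∧ (a1 + 1) < n ∧ 0 ≤ (a2 + 1) ∧ (a2 + 1) < m)) :=
       fun e => H y1 y2 (a1 + 1) (a2 + 1) (by omega)
     try have g3 : ¬ ((y1 ≥ 0) ∧ (0 ≤ (a1 + 1) ∧ (a1 + 1) < n ∧ 0 ≤ (a2 - 1) ∧ (a2 - 1) < m)) :=
       fun e => H y1 y2 (a1 + 1) (a2 - 1) (by omega)
     try have g4 : ¬ ((y1 ≥ 0) ∧ (0 ≤ (c1 + 1) ∧ (c1 + 1) < n ∧ 0 ≤ c2 ∧ c2 < m)) :=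
       fun e => H y1 y2 (c1 + 1) c2 (by omega)
     try have g5 : ¬ ((y1 ≥ 0) ∧ (0 ≤ (c1 - 1) ∧ (c1 - 1) < n ∧ 0 ≤ c2 ∧ c2 < m)) :=
       fun e => H y1 y2 (c1 - 1) c2 (by omega)
     try have g6 : ¬ ((y1 ≥ 0) ∧ (0 ≤ c1 ∧ c1 < n ∧ 0 ≤ (c2 + 1) ∧ (c2 + 1) < m)) :=
       fun e => H y1 y2 c1 (c2 + 1) (by omega)
     try have g7 : ¬ ((y1 ≥ 0) ∧ (0 ≤ c1 ∧ c1 < n ∧ 0 ≤ (c2 - 1) ∧ (c2 - 1) < m)) :=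
       fun e => H y1 y2 c1 (c2 - 1) (by omega)
     try have g8 : ¬ (((a1 - 1) ≥ 0) ∧ (0 ≤ (a1 + 2) ∧ (a1 + 2) < n ∧ 0 ≤ a2 ∧ a2 < m)) :=
       fun e => H (a1 - 1) a2 (a1 + 2) a2 (by omega)
     try have g9 : ¬ (((a1 - 1) ≥ 0) ∧ (0 ≤ (a1 + 1) ∧ (a1 + 1) < n ∧ 0 ≤ (a2 + 1) ∧ (a2 + 1) < m)) :=
       fun e => H (a1 - 1) a2 (a1 + 1) (a2 + 1) (by omega)
     try have g10 : ¬ (((a1 - 1) ≥ 0) ∧ (0 ≤ (a1 + 1) ∧ (a1 + 1) < n ∧ 0 ≤ (a2 - 1) ∧ (a2 - 1) < m)) :=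
       fun e => H (a1 - 1) a2 (a1 + 1) (a2 - 1) (by omega)
     try have g11 : ¬ (((a1 - 1) ≥ 0) ∧ (0 ≤ (c1 + 1) ∧ (c1 + 1) < n ∧ 0 ≤ c2 ∧ c2 < m)) :=
       fun e => H (a1 - 1) a2 (c1 + 1) c2 (by omega)
     try have g12 : ¬ (((a1 - 1) ≥ 0) ∧ (0 ≤ (c1 - 1) ∧ (c1 - 1) < n ∧ 0 ≤ c2 ∧ c2 < m)) :=
       fun e => H (a1 - 1) a2 (c1 - 1) c2 (by omega)
     try have g13 : ¬ (((a1 - 1) ≥ 0) ∧ (0 ≤ c1 ∧ c1 < n ∧ 0 ≤ (c2 + 1) ∧ (c2 + 1) < m)) :=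
       fun e => H (a1 - 1) a2 c1 (c2 + 1) (by omega)
     try have g14 : ¬ (((a1 - 1) ≥ 0) ∧ (0 ≤ c1 ∧ c1 < n ∧ 0 ≤ (c2 - 1) ∧ (c2 - 1) < m)) :=
       fun e => H (a1 - 1) a2 c1 (c2 - 1) (by omega)
     clear H
     omega)

end Upp

namespace Upp

theorem bx_r {n m p q : ℤ} (h : Bx n m p q) : Bx n m (n - 1 - p) q := by
  simp only [Bx] at *; omega

theorem bx_s {n m p q : ℤ} (h : Bx n m p q) : Bx m n q p := by
  simp only [Bx] at *; omega

theorem ad_r {n p q r s : ℤ} (h : Ad p q r s) : Ad (n - 1 - p) q (n - 1 - r) s := by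
  simp only [Ad] at *; omega

theorem ad_s {p q r s : ℤ} (h : Ad p q r s) : Ad q p s r := by
  simp only [Ad] at *; omega

theorem far_r {k n p q r s : ℤ} (h : Far k p q r s) : Far k (n - 1 - p) q (n - 1 - r) s := by
  simp only [Far] at *; omega

theorem far_s {k p q r s : ℤ} (h : Far k p q r s) : Far k q p s r := by
  simp only [Far] at *; omega

theorem ne_r {n p q r s : ℤ} (h : ¬ (p = r ∧ q = s)) : ¬ (n - 1 - p = n - 1 - r ∧ q = s) := by
  omega

theorem ne_s {p q r s : ℤ} (h : ¬ (p = r ∧ q = s)) : ¬ (q = s ∧ p = r) := by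
  omega

theorem wit1_r {n m a1 a2 b1 b2 c1 c2 y1 y2 w1 w2 : ℤ}
    (h : Wit1 n m a1 a2 b1 b2 c1 c2 y1 y2 w1 w2) :
    Wit1 n m (n - 1 - a1) a2 (n - 1 - b1) b2 (n - 1 - c1) c2 (n - 1 - y1) y2 (n - 1 - w1) w2 := by
  obtain ⟨h1, h2, h3, h4, h5, h6, h7, h8, h9, h10⟩ := h
  exact ⟨bx_r h1, bx_r h2, ad_r h3, ne_r h4, ne_r h5, ne_r h6, ne_r h7, ne_r h8,
    h9.imp ad_r ad_r, far_r h10⟩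

theorem wit1_s {n m a1 a2 b1 b2 c1 c2 y1 y2 w1 w2 : ℤ}
    (h : Wit1 n m a1 a2 b1 b2 c1 c2 y1 y2 w1 w2) :
    Wit1 m n a2 a1 b2 b1 c2 c1 y2 y1 w2 w1 := by
  obtain ⟨h1, h2, h3, h4, h5, h6, h7, h8, h9, h10⟩ := h
  exact ⟨bx_s h1, bx_s h2, ad_s h3, ne_s h4, ne_s h5, ne_s h6, ne_s h7, ne_s h8,
    h9.imp ad_s ad_s, far_s h10⟩

theorem geo1_row (n m a1 a2 b1 b2 c1 c2 y1 y2 : ℤ) (hn : 4 ≤ n) (hm : 4 ≤ m)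
    (ha : Bx n m a1 a2) (hb : Bx n m b1 b2) (hc : Bx n m c1 c2) (hy : Bx n m y1 y2)
    (hab : (a1 + 1 = b1 ∨ b1 + 1 = a1) ∧ a2 = b2) (hac : Ad a1 a2 c1 c2) (hya : Ad y1 y2 a1 a2)
    (hyb : ¬ (y1 = b1 ∧ y2 = b2)) (hyc : ¬ (y1 = c1 ∧ y2 = c2)) :
    ∃ y1 y2 w1 w2, Wit1 n m a1 a2 b1 b2 c1 c2 y1 y2 w1 w2 := by
  rcases hab with ⟨rfl | rfl, rfl⟩
  · exact geo1_aux n m a1 a2 c1 c2 y1 y2 hn hm ha hb hc hy hac hya hyb hyc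
  · have e : n - 1 - (b1 + 1) + 1 = n - 1 - b1 := by ring
    have g := geo1_aux n m (n - 1 - (b1 + 1)) a2 (n - 1 - c1) c2 (n - 1 - y1) y2 hn hm
    rw [e] at g
    obtain ⟨y1, y2, w1, w2, h⟩ := g (bx_r ha) (bx_r hb) (bx_r hc) (bx_r hy) (ad_r hac) (ad_r hya)
      (ne_r hyb) (ne_r hyc)
    have h := wit1_r h
    simp only [sub_sub_cancel] at h
    exact ⟨_, _, _, _, h⟩

theorem geo1 (n m a1 a2 b1 b2 c1 c2 y1 y2 : ℤ) (hn : 4 ≤ n) (hm : 4 ≤ m)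
    (ha : Bx n m a1 a2) (hb : Bx n m b1 b2) (hc : Bx n m c1 c2) (hy : Bx n m y1 y2)
    (hab : Ad a1 a2 b1 b2) (hac : Ad a1 a2 c1 c2) (hya : Ad y1 y2 a1 a2)
    (hyb : ¬ (y1 = b1 ∧ y2 = b2)) (hyc : ¬ (y1 = c1 ∧ y2 = c2)) :
    ∃ y1 y2 w1 w2, Wit1 n m a1 a2 b1 b2 c1 c2 y1 y2 w1 w2 := by
  rcases hab with hab | hab
  · exact geo1_row n m a1 a2 b1 b2 c1 c2 y1 y2 hn hm ha hb hc hy hab hac hya hyb hyc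
  · obtain ⟨y1, y2, w1, w2, h⟩ := geo1_row m n a2 a1 b2 b1 c2 c1 y2 y1 hm hn (bx_s ha) (bx_s hb)
      (bx_s hc) (bx_s hy) hab (ad_s hac) (ad_s hya) (ne_s hyb) (ne_s hyc)
    exact ⟨_, _, _, _, wit1_s h⟩

theorem wit2_r {n m a1 a2 b1 b2 c1 c2 y1 y2 w1 w2 : ℤ}
    (h : Wit2 n m a1 a2 b1 b2 c1 c2 y1 y2 w1 w2) :
    Wit2 n m (n - 1 - a1) a2 (n - 1 - b1) b2 (n - 1 - c1) c2 (n - 1 - y1) y2 (n - 1 - w1) w2 := by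
  obtain ⟨h1, h2, h3, h4, h5, h6, h7, h8, h9⟩ := h
  exact ⟨bx_r h1, bx_r h2, ad_r h3, ne_r h4, ne_r h5, ne_r h6, ne_r h7, ne_r h8,
    h9.imp (And.imp ad_r far_r) (And.imp ad_r far_r)⟩

theorem wit2_s {n m a1 a2 b1 b2 c1 c2 y1 y2 w1 w2 : ℤ}
    (h : Wit2 n m a1 a2 b1 b2 c1 c2 y1 y2 w1 w2) :
    Wit2 m n a2 a1 b2 b1 c2 c1 y2 y1 w2 w1 := by
  obtain ⟨h1, h2, h3, h4, h5, h6, h7, h8, h9⟩ := h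
  exact ⟨bx_s h1, bx_s h2, ad_s h3, ne_s h4, ne_s h5, ne_s h6, ne_s h7, ne_s h8,
    h9.imp (And.imp ad_s far_s) (And.imp ad_s far_s)⟩

theorem geo2_row (n m a1 a2 b1 b2 c1 c2 y1 y2 : ℤ) (hn : 4 ≤ n) (hm : 4 ≤ m)
    (ha : Bx n m a1 a2) (hb : Bx n m b1 b2) (hc : Bx n m c1 c2) (hy : Bx n m y1 y2)
    (hab : (a1 + 1 = b1 ∨ b1 + 1 = a1) ∧ a2 = b2) (hac : Ad b1 b2 c1 c2) (hya : Ad y1 y2 a1 a2)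
    (hne : ¬ (c1 = a1 ∧ c2 = a2))
    (hyb : ¬ (y1 = b1 ∧ y2 = b2)) (hyc : ¬ (y1 = c1 ∧ y2 = c2)) :
    ∃ y1 y2 w1 w2, Wit2 n m a1 a2 b1 b2 c1 c2 y1 y2 w1 w2 := by
  rcases hab with ⟨rfl | rfl, rfl⟩
  · exact geo2_aux n m a1 a2 c1 c2 y1 y2 hn hm ha hb hc hy hac hya hne hyb hyc
  · have e : n - 1 - (b1 + 1) + 1 = n - 1 - b1 := by ring
    have g := geo2_aux n m (n - 1 - (b1 + 1)) a2 (n - 1 - c1) c2 (n - 1 - y1) y2 hn hm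
    rw [e] at g
    obtain ⟨y1, y2, w1, w2, h⟩ := g (bx_r ha) (bx_r hb) (bx_r hc) (bx_r hy) (ad_r hac) (ad_r hya)
      (ne_r hne) (ne_r hyb) (ne_r hyc)
    have h := wit2_r h
    simp only [sub_sub_cancel] at h
    exact ⟨_, _, _, _, h⟩

theorem geo2 (n m a1 a2 b1 b2 c1 c2 y1 y2 : ℤ) (hn : 4 ≤ n) (hm : 4 ≤ m)
    (ha : Bx n m a1 a2) (hb : Bx n m b1 b2) (hc : Bx n m c1 c2) (hy : Bx n m y1 y2)
    (hab : Ad a1 a2 b1 b2) (hac : Ad b1 b2 c1 c2) (hya : Ad y1 y2 a1 a2)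
    (hne : ¬ (c1 = a1 ∧ c2 = a2))
    (hyb : ¬ (y1 = b1 ∧ y2 = b2)) (hyc : ¬ (y1 = c1 ∧ y2 = c2)) :
    ∃ y1 y2 w1 w2, Wit2 n m a1 a2 b1 b2 c1 c2 y1 y2 w1 w2 := by
  rcases hab with hab | hab
  · exact geo2_row n m a1 a2 b1 b2 c1 c2 y1 y2 hn hm ha hb hc hy hab hac hya hne hyb hyc
  · obtain ⟨y1, y2, w1, w2, h⟩ := geo2_row m n a2 a1 b2 b1 c2 c1 y2 y1 hm hn (bx_s ha) (bx_s hb)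
      (bx_s hc) (bx_s hy) hab (ad_s hac) (ad_s hya) (ne_s hne) (ne_s hyb) (ne_s hyc)
    exact ⟨_, _, _, _, wit2_s h⟩

section
variable {n m : ℕ} {A : Fin n × Fin m → Fin n × Fin m → Prop}

/-- First integer coordinate. -/
def X (x : Fin n × Fin m) : ℤ := (x.1.val : ℤ)
/-- Second integer coordinate. -/
def Y (x : Fin n × Fin m) : ℤ := (x.2.val : ℤ)

theorem bx (x : Fin n × Fin m) : Bx n m (X x) (Y x) := by
  have h1 := x.1.isLt
  have h2 := x.2.isLt
  simp only [Bx, X, Y]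
  omega

theorem eq_iff (x y : Fin n × Fin m) : x = y ↔ (X x = X y ∧ Y x = Y y) := by
  simp only [Prod.ext_iff, Fin.ext_iff, X, Y]
  omega

theorem ad_iff (x y : Fin n × Fin m) : (gridGraph n m).Adj x y ↔ Ad (X x) (Y x) (X y) (Y y) := by
  rw [grid_adj]
  simp only [Ad, Fin.ext_iff, X, Y]
  omega

theorem of_bx {p q : ℤ} (h : Bx n m p q) : ∃ x : Fin n × Fin m, X x = p ∧ Y x = q := by
  obtain ⟨h1, h2, h3, h4⟩ := h
  refine ⟨(⟨p.toNat, by omega⟩, ⟨q.toNat, by omega⟩), ?_, ?_⟩ <;> simp only [X, Y] <;> omega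

theorem wk_dist (hA : IsOrientation (gridGraph n m) A) {k : ℕ} {u v : Fin n × Fin m}
    (h : Wk A k u v) : ¬ Far (k + 1) (X u) (Y u) (X v) (Y v) := by
  induction k generalizing u with
  | zero =>
    have : u = v := h
    subst this
    simp only [Far]; omega
  | succ k ih =>
    obtain ⟨x, hx, hw⟩ := h
    have h1 := ih hw
    have h2 := (ad_iff _ _).1 (hA.1 _ _ hx)
    simp only [Far, Ad] at *
    push_cast
    rcases h2 with ⟨h | h, h'⟩ | ⟨h | h, h'⟩ <;> omega

theorem kill (hA : IsOrientation (gridGraph n m) A) {C : Set (Fin n × Fin m)} (hC : Cvx A C)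
    {y a w : Fin n × Fin m} (hy : y ∈ C) (hw : w ∈ C) {i j : ℕ} (h1 : Wk A i y a)
    (h2 : Wk A j a w) (hf : Far ((i + j : ℕ) : ℤ) (X y) (Y y) (X w) (Y w)) : a ∈ C := by
  refine hC.2 y hy w hw a i j h1 h2 fun k hk => ?_
  have := wk_dist hA hk
  simp only [Far] at *
  omega

theorem core (hn : 4 ≤ n) (hm : 4 ≤ m) (hA : IsOrientation (gridGraph n m) A) (hs : Str A)
    {C : Set (Fin n × Fin m)} (hC : Cvx A C) (hcard : Cᶜ.ncard ≤ 3) {a y0 : Fin n × Fin m}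
    (ha : a ∉ C) (hy0 : y0 ∈ C) (hya : A y0 a)
    (hin : ∀ t ∉ C, ∀ y ∈ C, A y t → t = a) : False := by
  classical
  have hay0 : a ≠ y0 := fun h => ha (h ▸ hy0)
  have : Nonempty (Fin n × Fin m) := ⟨a⟩
  have hU : Cvx A Set.univ := cvx_univ_nontrivial
  -- all arcs between `a` and `C` enter `a`
  have toa : ∀ y ∈ C, (gridGraph n m).Adj y a → A y a := by
    intro y hy had
    rcases hA.2.1 _ _ had with h | h
    · exact h
    · exfalso
      have hne : y0 ≠ y := by
        rintro rfl
        exact hA.2.2 _ _ hya h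
      refine ha (kill hA hC hy0 hy (wk_one hya) (wk_one h) ?_)
      have e1 := (ad_iff _ _).1 had
      have e2 := (ad_iff _ _).1 (hA.1 _ _ hya)
      rw [ne_eq, eq_iff] at hne
      simp only [Ad, Far] at *
      push_cast
      rcases e1 with ⟨h | h, h'⟩ | ⟨h | h, h'⟩ <;> rcases e2 with ⟨k | k, k'⟩ | ⟨k | k, k'⟩ <;> omega
  have fromt : ∀ t ∉ C, t ≠ a → ∀ w ∈ C, (gridGraph n m).Adj t w → A t w := by
    intro t ht hta w hw had
    rcases hA.2.1 _ _ had with h | h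
    · exact h
    · exact absurd (hin t ht w hw h) hta
  obtain ⟨b, -, hab⟩ := cvx_out hs hU (Set.mem_univ a) (Set.mem_univ y0) hay0
  have hb : b ∉ C := fun hb => hA.2.2 _ _ hab (toa b hb (hA.1 _ _ hab).symm)
  have hba : b ≠ a := by
    rintro rfl
    exact hA.2.2 _ _ hab hab
  have hc : ∃ c ∉ C, c ≠ a ∧ (∀ t ∉ C, t = a ∨ t = b ∨ t = c) ∧ (A a c ∨ A b c) := by
    by_cases hex : ∃ c ∉ C, c ≠ a ∧ c ≠ b
    · obtain ⟨c, hc, hca, hcb⟩ := hex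
      have hall : ∀ t ∉ C, t = a ∨ t = b ∨ t = c := by
        intro t ht
        by_contra hcon
        push Not at hcon
        have hsub : (({a, b, c, t} : Finset (Fin n × Fin m)) : Set (Fin n × Fin m)) ⊆ Cᶜ := by
          intro x hx
          simp only [Finset.coe_insert, Finset.coe_singleton, Set.mem_insert_iff,
            Set.mem_singleton_iff] at hx
          rcases hx with rfl | rfl | rfl | rfl <;> assumption
        have h1 := Set.ncard_le_ncard hsub (Set.toFinite _)
        rw [Set.ncard_coe_finset] at h1
        have h2 : ({a, b, c, t} : Finset (Fin n × Fin m)).card = 4 := by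
          simp [hba.symm, hca.symm, hcb.symm, hcon.1.symm, hcon.2.1.symm, hcon.2.2.symm]
        omega
      refine ⟨c, hc, hca, hall, ?_⟩
      obtain ⟨x, -, hx⟩ := cvx_in hs hU (Set.mem_univ c) (Set.mem_univ a) hca
      have hxC : x ∉ C := fun h => hca (hin c hc x h hx)
      rcases hall x hxC with rfl | rfl | rfl
      · exact Or.inl hx
      · exact Or.inr hx
      · exact absurd hx (hA.2.2 _ _ hx)
    · push Not at hex
      refine ⟨b, hb, hba, fun t ht => ?_, Or.inl hab⟩
      by_cases h : t = a
      · exact Or.inl h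
      · exact Or.inr (Or.inl (hex t ht h))
  obtain ⟨c, hc, hca, hall, harc⟩ := hc
  have hyb : ¬ (X y0 = X b ∧ Y y0 = Y b) := by
    rw [← eq_iff]; rintro rfl; exact hb hy0
  have hyc : ¬ (X y0 = X c ∧ Y y0 = Y c) := by
    rw [← eq_iff]; rintro rfl; exact hc hy0
  have inC : ∀ x, x ≠ a → x ≠ b → x ≠ c → x ∈ C := by
    intro x h1 h2 h3
    by_contra h
    rcases hall x h with h | h | h <;> contradiction
  have adya := (ad_iff _ _).1 (hA.1 _ _ hya)
  have adab := (ad_iff _ _).1 (hA.1 _ _ hab)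
  rcases harc with harc | harc
  · obtain ⟨p, q, r, s, h1, h2, h3, h4, h5, h6, h7, h8, h9, h10⟩ :=
      geo1 n m (X a) (Y a) (X b) (Y b) (X c) (Y c) (X y0) (Y y0) (by omega) (by omega)
      (bx _) (bx _) (bx _) (bx _) adab ((ad_iff _ _).1 (hA.1 _ _ harc)) adya hyb hyc
    obtain ⟨y, rfl, rfl⟩ := of_bx h1
    obtain ⟨w, rfl, rfl⟩ := of_bx h2
    rw [← eq_iff] at h4 h5 h6 h7 h8
    rw [← ad_iff] at h3 h9
    rw [← ad_iff] at h9
    have hyC : y ∈ C := inC y (fun h => (h ▸ h3).ne rfl) h4 h5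
    have hwC : w ∈ C := inC w h6 h7 h8
    have hya' := toa y hyC h3
    rcases h9 with h9 | h9
    · exact ha (kill (i := 1) (j := 2) hA hC hyC hwC (wk_one hya')
        (wk_snoc (wk_one hab) (fromt b hb hba w hwC h9)) h10)
    · exact ha (kill (i := 1) (j := 2) hA hC hyC hwC (wk_one hya')
        (wk_snoc (wk_one harc) (fromt c hc hca w hwC h9)) h10)
  · obtain ⟨p, q, r, s, h1, h2, h3, h4, h5, h6, h7, h8, h9⟩ :=
      geo2 n m (X a) (Y a) (X b) (Y b) (X c) (Y c) (X y0) (Y y0) (by omega) (by omega)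
      (bx _) (bx _) (bx _) (bx _) adab ((ad_iff _ _).1 (hA.1 _ _ harc)) adya
      (by rw [← eq_iff]; exact hca) hyb hyc
    obtain ⟨y, rfl, rfl⟩ := of_bx h1
    obtain ⟨w, rfl, rfl⟩ := of_bx h2
    rw [← eq_iff] at h4 h5 h6 h7 h8
    rw [← ad_iff] at h3 h9
    rw [← ad_iff] at h9
    have hyC : y ∈ C := inC y (fun h => (h ▸ h3).ne rfl) h4 h5
    have hwC : w ∈ C := inC w h6 h7 h8
    have hya' := toa y hyC h3
    rcases h9 with ⟨h9, h10⟩ | ⟨h9, h10⟩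
    · exact ha (kill (i := 1) (j := 2) hA hC hyC hwC (wk_one hya')
        (wk_snoc (wk_one hab) (fromt b hb hba w hwC h9)) h10)
    · exact ha (kill (i := 1) (j := 3) hA hC hyC hwC (wk_one hya')
        (wk_snoc (wk_snoc (wk_one hab) harc) (fromt c hc hca w hwC h9)) h10)

theorem wk_flip {k : ℕ} {u v : Fin n × Fin m} (h : Wk A k u v) : Wk (fun x y => A y x) k v u := by
  induction k generalizing u with
  | zero => exact (show u = v from h).symm
  | succ k ih =>
    obtain ⟨x, hx, hw⟩ := h
    exact wk_snoc (ih hw) hx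

theorem cvx_flip {C : Set (Fin n × Fin m)} (hC : Cvx A C) : Cvx (fun x y => A y x) C := by
  refine ⟨hC.1, fun u hu v hv w i j h1 h2 hk => ?_⟩
  refine hC.2 v hv u hu w j i (wk_flip h2) (wk_flip h1) fun k h => ?_
  have := hk k (wk_flip h)
  omega

theorem enter (hs : Str A) {C : Set (Fin n × Fin m)} {u v : Fin n × Fin m} (hu : u ∈ C)
    (hv : v ∉ C) : ∃ y ∈ C, ∃ t ∉ C, A y t := by
  obtain ⟨k, hk⟩ := hs u v
  induction k generalizing u with
  | zero => exact absurd ((show u = v from hk) ▸ hu) hv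
  | succ k ih =>
    obtain ⟨x, hx, hw⟩ := hk
    by_cases h : x ∈ C
    · exact ih h hw
    · exact ⟨u, hu, x, h, hx⟩

theorem compl_big (hn : 4 ≤ n) (hm : 4 ≤ m) (hA : IsOrientation (gridGraph n m) A) (hs : Str A)
    {C : Set (Fin n × Fin m)} (hC : Cvx A C) (hne : C ≠ Set.univ) : 4 ≤ Cᶜ.ncard := by
  classical
  by_contra hcon
  have hcard : Cᶜ.ncard ≤ 3 := by omega
  have hs' : Str (fun x y => A y x) := fun u v => (hs v u).imp fun k hk => wk_flip hk
  have hA' : IsOrientation (gridGraph n m) (fun x y => A y x) :=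
    ⟨fun x y h => (hA.1 _ _ h).symm, fun x y h => (hA.2.1 _ _ h).symm, fun x y h => hA.2.2 _ _ h⟩
  obtain ⟨v, hv⟩ := (Set.ne_univ_iff_exists_notMem C).1 hne
  obtain ⟨u, hu⟩ := hC.1
  obtain ⟨y, hy, p, hp, hyp⟩ := enter hs hu hv
  obtain ⟨w, hw, q, hq, hqw⟩ := enter hs' hu hv
  have disj : ∀ t ∉ C, ∀ y ∈ C, ∀ w ∈ C, A y t → ¬ A t w := by
    intro t ht y hy w hw h1 h2
    have hyw : y ≠ w := by
      rintro rfl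
      exact hA.2.2 _ _ h1 h2
    refine ht (kill hA hC hy hw (wk_one h1) (wk_one h2) ?_)
    have e1 := (ad_iff _ _).1 (hA.1 _ _ h1)
    have e2 := (ad_iff _ _).1 (hA.1 _ _ h2)
    rw [ne_eq, eq_iff] at hyw
    simp only [Ad, Far] at *
    push_cast
    rcases e1 with ⟨h | h, h'⟩ | ⟨h | h, h'⟩ <;> rcases e2 with ⟨k | k, k'⟩ | ⟨k | k, k'⟩ <;> omega
  by_cases h1 : ∀ t ∉ C, ∀ y ∈ C, A y t → t = p
  · exact core hn hm hA hs hC hcard hp hy hyp h1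
  by_cases h2 : ∀ t ∉ C, ∀ y ∈ C, A t y → t = q
  · exact core hn hm hA' hs' (cvx_flip hC) hcard hq hw hqw h2
  push Not at h1 h2
  obtain ⟨p', hp', y', hy', hyp', hpp⟩ := h1
  obtain ⟨q', hq', w', hw', hqw', hqq⟩ := h2
  have d1 : p ≠ q := fun h => disj p hp y hy w hw hyp (h ▸ hqw)
  have d2 : p ≠ q' := fun h => disj p hp y hy w' hw' hyp (h ▸ hqw')
  have d3 : p' ≠ q := fun h => disj p' hp' y' hy' w hw hyp' (h ▸ hqw)
  have d4 : p' ≠ q' := fun h => disj p' hp' y' hy' w' hw' hyp' (h ▸ hqw')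
  have hsub : (({p, p', q, q'} : Finset (Fin n × Fin m)) : Set (Fin n × Fin m)) ⊆ Cᶜ := by
    intro x hx
    simp only [Finset.coe_insert, Finset.coe_singleton, Set.mem_insert_iff,
      Set.mem_singleton_iff] at hx
    rcases hx with rfl | rfl | rfl | rfl <;> assumption
  have e1 := Set.ncard_le_ncard hsub (Set.toFinite _)
  rw [Set.ncard_coe_finset] at e1
  have e2 : ({p, p', q, q'} : Finset (Fin n × Fin m)).card = 4 := by
    simp [d1, d2, d3, d4, hpp.symm, hqq.symm]
  omega

end

theorem upper (n k : ℕ) (hn : 4 ≤ n) (h : k ∈ strongConvexitySpectrum (gridGraph n 4)) :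
    (1 ≤ k ∧ k ≤ 4 * n - 4) ∧ k ≠ 2 ∧ k ≠ 3 ∧ k ≠ 5 := by
  obtain ⟨A, hA, hs, hk⟩ := h
  rw [str_iff] at hs
  have hmem : k ∈ {k | ∃ C : Set (Fin n × Fin 4), DConvex A C ∧ C ≠ Set.univ ∧ C.ncard = k} := by
    rw [← hk]
    apply Nat.sSup_mem
    · let x : Fin n × Fin 4 := (⟨0, by omega⟩, 0)
      refine ⟨1, {x}, dconvex_iff.2 (cvx_singleton x), ?_, Set.ncard_singleton x⟩
      intro h
      have : ((⟨0, by omega⟩, 1) : Fin n × Fin 4) ∈ ({x} : Set (Fin n × Fin 4)) := by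
        rw [h]; trivial
      simp [x] at this
    · refine ⟨Nat.card (Fin n × Fin 4), ?_⟩
      rintro k ⟨C, -, -, rfl⟩
      exact Set.ncard_le_card C
  obtain ⟨C, hC, hne, rfl⟩ := hmem
  rw [dconvex_iff] at hC
  have h1 : 0 < C.ncard := (Set.ncard_pos (Set.toFinite C)).2 hC.1
  have h2 := compl_big hn (le_refl 4) hA hs hC hne
  have h3 := Set.ncard_add_ncard_compl C
  have h4 : Nat.card (Fin n × Fin 4) = n * 4 := by simp
  exact ⟨⟨h1, by omega⟩, not_235 hA hs hC⟩

end Upp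

/-- The strong convexity spectrum of the grid `P_n □ P_4`. -/
theorem strongConvexitySpectrum_grid_n4 (n : ℕ) (hn : 4 ≤ n) :
    strongConvexitySpectrum (gridGraph n 4) =
      {k : ℕ | 1 ≤ k ∧ k ≤ 4 * n - 4} \ {2, 3, 5} := by
  ext k
  simp only [Set.mem_sdiff, Set.mem_ofPred_eq, Set.mem_insert_iff, Set.mem_singleton_iff, not_or]
  constructor
  · exact Upp.upper n k hn
  · rintro ⟨⟨h1, h2⟩, h3, h4, h5⟩
    exact construct n k hn h1 h2 h3 h4 h5
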